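/- Let N ⊆ M_m be a unital *-subalgebra, 1 < p ≤ ∞ with 1/p + 1/p' = 1, and ρ ∈ M_m a density. Then exp(D_p(ρ‖N)/p') = sup{Tr(xρ) : x ∈ M_m, x positive semidefinite, and ‖a x b‖_{p'} ≤ ‖a‖_{2p'} ‖b‖_{2p'} for all a, b ∈ N}. -/

import Mathlib

/-!
Put `s = 1 / (2 p')`. For finite `p`, `exp (D_p(ρ‖N) / p')` is the gauge at `ρ` of the set `W` of
all `ω ≥ 0` with `‖σ ^ (-s) * ω * σ ^ (-s)‖_p ≤ 1` for some density `σ ∈ N` supporting `ω`. The set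
`W` is convex because `(ω, σ) ↦ Tr ((σ ^ (-s) * ω * σ ^ (-s)) ^ p)` is homogeneous and subadditive:
the factors `(∑ σᵢ) ^ (-z / 2) * σᵢ ^ (z / 2)` are contractions for `re z = 0` and form a row
contraction for `re z = 1`, so the three lines theorem applies. Hence, by Hahn–Banach, the gauge is
the supremum of `Tr (x ρ)` over the `x ≥ 0` in the polar of `W`. By Schatten duality the polar is
given by `‖σ ^ s * x * σ ^ s‖_{p'} ≤ 1` for all densities `σ ∈ N`, and by polar decomposition and
Hölder's inequality this says that `(a, b) ↦ a * x * b` is a contraction. For `p = ∞` the same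
argument applies, with `W` the set of densities of `N`.
-/

open scoped ENNReal Classical ComplexOrder
open Matrix

noncomputable section

namespace GJL

variable {n : Type*} [Fintype n] [DecidableEq n]

/-- `Mat n` is the matrix *-algebra with rows and columns indexed by `n`. -/
abbrev Mat (n : Type*) [Fintype n] [DecidableEq n] := Matrix n n ℂ

/-- A density matrix: positive semidefinite with trace one. -/
def IsDensity (ρ : Mat n) : Prop := ρ.PosSemidef ∧ ρ.trace = 1

/-- The real part of the (matrix) trace. -/
def traceR (A : Mat n) : ℝ := (A.trace).re

/-- Real matrix powers via the continuous functional calculus.  For positive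
semidefinite matrices and negative exponents this is the generalized inverse
power on the support, since `(0 : ℝ) ^ r = 0` for `r ≠ 0`. -/
def mpow (A : Mat n) (r : ℝ) : Mat n := cfc (fun x : ℝ => x ^ r) A

/-- Matrix logarithm on the support (`Real.log 0 = 0`). -/
def mlog (A : Mat n) : Mat n := cfc Real.log A

/-- Schatten `p`-norm `(Tr ((x* x)^(p/2)))^(1/p)`. -/
def snorm (p : ℝ) (x : Mat n) : ℝ := (traceR (mpow (xᴴ * x) (p/2))) ^ (1/p)

/-- Operator norm `‖x‖_∞`. -/
def opNorm (x : Mat n) : ℝ := ‖(Matrix.toEuclideanCLM (𝕜 := ℂ) x : EuclideanSpace ℂ n →L[ℂ] EuclideanSpace ℂ n)‖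

/-- The support projection of `ρ` is dominated by that of `σ` (for positive
semidefinite matrices: `ker σ ⊆ ker ρ`). -/
def suppLe (ρ σ : Mat n) : Prop := ∀ v, σ.mulVec v = 0 → ρ.mulVec v = 0

/-- `e` is the support projection of `ρ`. -/
def IsSupportProj (ρ e : Mat n) : Prop :=
  e.IsHermitian ∧ e * e = e ∧ ∀ v, e.mulVec v = 0 ↔ ρ.mulVec v = 0

/-- `D_∞(ρ‖σ) = log min {λ ≥ 0 | ρ ≤ λ σ}`, `⊤` if no such `λ` exists. -/
def Dinf (ρ σ : Mat n) : EReal :=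
  if ∃ c : ℝ, 0 ≤ c ∧ (c • σ - ρ).PosSemidef then
    ((Real.log (sInf {c : ℝ | 0 ≤ c ∧ (c • σ - ρ).PosSemidef}) : ℝ) : EReal)
  else ⊤

/-- Umegaki relative entropy `D(ρ‖σ) = Tr(ρ log ρ - ρ log σ)`, `⊤` if the
support condition fails. -/
def DU (ρ σ : Mat n) : EReal :=
  if suppLe ρ σ then ((traceR (ρ * mlog ρ - ρ * mlog σ) : ℝ) : EReal) else ⊤

/-- The sandwiched matrix `σ^{(1-p)/(2p)} ρ σ^{(1-p)/(2p)}`; note that for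
`p > 1` the exponent `(1-p)/(2p)` equals `-1/(2p')` with `1/p + 1/p' = 1`. -/
def sandwich (p : ℝ) (ρ σ : Mat n) : Mat n :=
  mpow σ ((1 - p)/(2*p)) * ρ * mpow σ ((1 - p)/(2*p))

/-- The sandwiched Rényi relative entropy `D_p(ρ‖σ)` for `p ∈ [1/2, ∞]`:
for `p ∈ (1,∞)` it is `p' log ‖σ^{-1/(2p')} ρ σ^{-1/(2p')}‖_p
= (p-1)⁻¹ log Tr ((σ^{-1/(2p')} ρ σ^{-1/(2p')})^p)` when the support of `ρ` is
dominated by that of `σ` and `⊤` otherwise; for `p ∈ [1/2, 1)` it is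
`(p-1)⁻¹ log Tr ((σ^{(1-p)/(2p)} ρ σ^{(1-p)/(2p)})^p)` (`⊤` when the trace
vanishes, i.e. when the honest value is `+∞`); `D_1` is the Umegaki relative
entropy and `D_∞` the max-relative entropy. -/
def Dp (p : ℝ≥0∞) (ρ σ : Mat n) : EReal :=
  if p = ⊤ then Dinf ρ σ
  else if p = 1 then DU ρ σ
  else if 1 < p.toReal ∧ ¬ suppLe ρ σ then ⊤
  else if traceR (mpow (sandwich p.toReal ρ σ) p.toReal) = 0 then ⊤
  else (((p.toReal - 1)⁻¹ * Real.log (traceR (mpow (sandwich p.toReal ρ σ) p.toReal)) : ℝ) : EReal)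

/-- `D_p(ρ‖S) = inf { D_p(ρ‖σ) | σ a density in S }`. -/
def DpSet (p : ℝ≥0∞) (ρ : Mat n) (S : Set (Mat n)) : EReal :=
  ⨅ σ ∈ {σ ∈ S | IsDensity σ}, Dp p ρ σ

/-- `D_p(A‖S) = sup { D_p(ρ‖S) | ρ a density in A }`. -/
def DpRel (p : ℝ≥0∞) (A S : Set (Mat n)) : EReal :=
  ⨆ ρ ∈ {ρ ∈ A | IsDensity ρ}, DpSet p ρ S

open scoped Kronecker in
/-- The algebraic tensor product `N₁ ⊗ N₂ ⊆ M_{n₁} ⊗ M_{n₂} = M_{n₁ × n₂}`,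
realized as the linear span of Kronecker products. -/
def tensorSpan {n₁ n₂ : Type*} [Fintype n₁] [DecidableEq n₁] [Fintype n₂] [DecidableEq n₂]
    (N₁ : Set (Mat n₁)) (N₂ : Set (Mat n₂)) : Set (Mat (n₁ × n₂)) :=
  ↑(Submodule.span ℂ {z : Mat (n₁ × n₂) | ∃ x ∈ N₁, ∃ y ∈ N₂, z = x ⊗ₖ y})

/-- `D_{p,cb}(M‖N) = sup_k D_p(M_k ⊗ M ‖ M_k ⊗ N)`. -/
def DpCb (p : ℝ≥0∞) (N : Set (Mat n)) : EReal :=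
  ⨆ k : ℕ, DpRel p Set.univ (tensorSpan (Set.univ : Set (Mat (Fin k))) N)

/-- `E` is the trace preserving conditional expectation onto `N`, i.e. the
orthogonal projection onto `N` with respect to the Hilbert–Schmidt inner
product `⟨x,y⟩ = Tr(x* y)`. -/
def IsCondExp (N : Set (Mat n)) (E : Mat n →ₗ[ℂ] Mat n) : Prop :=
  (∀ x, E x ∈ N) ∧ (∀ x ∈ N, E x = x) ∧
    ∀ x y, y ∈ N → ((E x)ᴴ * y).trace = (xᴴ * y).trace

/-- The Pimsner–Popa index constant
`λ(M:N) = max {c ≥ 0 | c x ≤ E(x) for all x ≥ 0}`. -/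
def ppIndex (E : Mat n →ₗ[ℂ] Mat n) : ℝ :=
  sSup {c : ℝ | 0 ≤ c ∧ ∀ x : Mat n, x.PosSemidef → (E x - c • x).PosSemidef}

/-- von Neumann entropy `H(ρ) = -Tr(ρ log ρ)`. -/
def vnEntropy (ρ : Mat n) : ℝ := - traceR (ρ * mlog ρ)

/-- The amplification `id_{M_k} ⊗ Φ` acting on `M_k ⊗ M_n = M_{k × n}`,
applying `Φ` blockwise. -/
def ampFun (k : Type*) [Fintype k] [DecidableEq k] (Φ : Mat n →ₗ[ℂ] Mat n)
    (X : Mat (k × n)) : Mat (k × n) :=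
  Matrix.of fun a b => Φ (Matrix.of fun s t => X (a.1, s) (b.1, t)) a.2 b.2

/-- Complete positivity: all amplifications `id_{M_k} ⊗ Φ` preserve positive
semidefiniteness. -/
def IsCP (Φ : Mat n →ₗ[ℂ] Mat n) : Prop :=
  ∀ (k : ℕ) (X : Mat (Fin k × n)), X.PosSemidef → (ampFun (Fin k) Φ X).PosSemidef

/-- Completely positive and trace preserving. -/
def IsCPTP (Φ : Mat n →ₗ[ℂ] Mat n) : Prop :=
  IsCP Φ ∧ ∀ x : Mat n, (Φ x).trace = x.trace

section SpectralMap

variable {A : Mat n}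

/-- Spectral calculus of a Hermitian matrix: a complex function on the index set of the
eigenvalues is turned into the matrix with these eigenvalues in the eigenbasis of `A`.  The complex
powers of `A` below are not values of the real functional calculus `cfc`. -/
def spectralMap (hA : A.IsHermitian) : (n → ℂ) →⋆ₐ[ℂ] Mat n where
  toAlgHom := (Unitary.conjStarAlgAut ℂ (Mat n) hA.eigenvectorUnitary : Mat n →ₐ[ℂ] Mat n).comp
    (diagonalAlgHom ℂ)
  map_star' f := by
    simp [star_eq_conjTranspose, mul_assoc]

theorem spectralMap_apply (hA : A.IsHermitian) (f : n → ℂ) :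
    spectralMap hA f = (hA.eigenvectorUnitary : Mat n) * diagonal f *
      star (hA.eigenvectorUnitary : Mat n) :=
  Unitary.conjStarAlgAut_apply (S := ℂ) ..

theorem cfc_eq_spectralMap (hA : A.IsHermitian) (f : ℝ → ℝ) :
    cfc f A = spectralMap hA fun i => (f (hA.eigenvalues i) : ℂ) :=
  hA.cfc_eq f

theorem trace_mul_spectralMap (C : Mat n) (hA : A.IsHermitian) (f : n → ℂ) :
    (C * spectralMap hA f).trace =
      ∑ i, (star (hA.eigenvectorUnitary : Mat n) * C * hA.eigenvectorUnitary) i i * f i := by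
  rw [spectralMap_apply, ← mul_assoc, trace_mul_comm]
  simp [trace, mul_assoc, ← mul_diagonal]

theorem posSemidef_spectralMap (hA : A.IsHermitian) {f : n → ℂ} (hf : 0 ≤ f) :
    (spectralMap hA f).PosSemidef := by
  rw [spectralMap_apply]
  exact (PosSemidef.diagonal hf).mul_mul_conjTranspose_same _

end SpectralMap

section RealPowers

variable {A : Mat n}

theorem mpow_eq_spectralMap (hA : A.IsHermitian) (s : ℝ) :
    mpow A s = spectralMap hA fun i => ((hA.eigenvalues i ^ s : ℝ) : ℂ) :=
  cfc_eq_spectralMap hA _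

theorem mpow_isHermitian (A : Mat n) (s : ℝ) : (mpow A s).IsHermitian :=
  cfc_predicate _ A

theorem mpow_posSemidef (hA : A.PosSemidef) (s : ℝ) : (mpow A s).PosSemidef := by
  rw [mpow_eq_spectralMap hA.1]
  refine posSemidef_spectralMap hA.1 fun i => ?_
  simpa using Real.rpow_nonneg (hA.eigenvalues_nonneg i) s

theorem mpow_one (hA : A.IsHermitian) : mpow A 1 = A := by
  simpa only [mpow, Real.rpow_one] using cfc_id' ℝ A hA.isSelfAdjoint

theorem mpow_zero (hA : A.IsHermitian) : mpow A 0 = 1 := by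
  simpa only [mpow, Real.rpow_zero] using cfc_const_one ℝ A hA.isSelfAdjoint

theorem mpow_mul_mpow (hA : A.PosSemidef) {s t : ℝ} (hst : s + t ≠ 0) :
    mpow A s * mpow A t = mpow A (s + t) := by
  simp only [mpow_eq_spectralMap hA.1, ← map_mul]
  congr 1 with i
  simp [Real.rpow_add' (hA.eigenvalues_nonneg i) hst]

theorem cfc_cfc (hA : A.IsHermitian) (f g : ℝ → ℝ) :
    cfc g (cfc f A) = cfc (fun x => g (f x)) A :=
  (cfc_comp' g f A ((finite_real_spectrum.image f).continuousOn g)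
    (finite_real_spectrum.continuousOn f) hA.isSelfAdjoint).symm

theorem mpow_mpow (hA : A.PosSemidef) (s t : ℝ) : mpow (mpow A s) t = mpow A (s * t) := by
  rw [mpow, mpow, cfc_cfc hA.1, mpow]
  simp only [cfc_eq_spectralMap hA.1, Real.rpow_mul (hA.eigenvalues_nonneg _)]

theorem mpow_smul (hA : A.PosSemidef) {c : ℝ} (hc : 0 ≤ c) (s : ℝ) :
    mpow (c • A) s = c ^ s • mpow A s := by
  have hcA : c • A = cfc (c * ·) A := by
    rw [cfc_const_mul _ _ A (finite_real_spectrum.continuousOn _), cfc_id' ℝ A hA.1.isSelfAdjoint]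
  rw [hcA, mpow, cfc_cfc hA.1, mpow, ← cfc_smul _ _ A (finite_real_spectrum.continuousOn _)]
  simp only [cfc_eq_spectralMap hA.1, Real.mul_rpow hc (hA.eigenvalues_nonneg _), smul_eq_mul]

theorem mpow_mem {N : StarSubalgebra ℂ (Mat n)} (hA : A ∈ N) (s : ℝ) : mpow A s ∈ N := by
  have hN : IsClosed (N : Set (Mat n)) :=
    (Subalgebra.toSubmodule N.toSubalgebra).closed_of_finiteDimensional
  exact cfc_mem (𝕜' := ℂ) (hs := hN) _ hA

end RealPowers

section Trace

variable {A B C : Mat n}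

theorem traceR_add (A B : Mat n) : traceR (A + B) = traceR A + traceR B := by
  simp [traceR]

theorem traceR_sub (A B : Mat n) : traceR (A - B) = traceR A - traceR B := by
  simp [traceR]

theorem traceR_smul (c : ℝ) (A : Mat n) : traceR (c • A) = c * traceR A := by
  simp [traceR]

theorem traceR_mul_comm (A B : Mat n) : traceR (A * B) = traceR (B * A) :=
  congrArg Complex.re (trace_mul_comm A B)

theorem traceR_nonneg (hA : A.PosSemidef) : 0 ≤ traceR A :=
  (Complex.nonneg_iff.1 hA.trace_nonneg).1

theorem mpow_half_mul_self (hA : A.PosSemidef) : mpow A (1 / 2) * mpow A (1 / 2) = A := by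
  rw [mpow_mul_mpow hA (by norm_num), add_halves, mpow_one hA.1]

theorem traceR_mul_nonneg (hA : A.PosSemidef) (hB : B.PosSemidef) : 0 ≤ traceR (A * B) := by
  have hconj := hB.mul_mul_conjTranspose_same (mpow A (1 / 2))
  rw [(mpow_isHermitian A _).eq] at hconj
  calc 0 ≤ traceR (mpow A (1 / 2) * B * mpow A (1 / 2)) := traceR_nonneg hconj
    _ = traceR (A * B) := by rw [traceR_mul_comm, ← mul_assoc, mpow_half_mul_self hA]

theorem traceR_mul_le_traceR_mul (hAB : (B - A).PosSemidef) (hC : C.PosSemidef) :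
    traceR (A * C) ≤ traceR (B * C) := by
  have h := traceR_mul_nonneg hAB hC
  rwa [sub_mul, traceR_sub, sub_nonneg] at h

theorem traceR_mpow (hA : A.IsHermitian) (s : ℝ) :
    traceR (mpow A s) = ∑ i, hA.eigenvalues i ^ s := by
  rw [traceR, mpow_eq_spectralMap hA, ← one_mul (spectralMap hA _), trace_mul_spectralMap]
  simp

theorem traceR_mpow_nonneg (hA : A.PosSemidef) (s : ℝ) : 0 ≤ traceR (mpow A s) :=
  traceR_nonneg (mpow_posSemidef hA s)

theorem traceR_mpow_pos (hA : A.PosSemidef) (hA0 : A ≠ 0) (s : ℝ) : 0 < traceR (mpow A s) := by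
  rw [traceR_mpow hA.1]
  obtain ⟨i, hi⟩ := Function.ne_iff.1 (mt hA.1.eigenvalues_eq_zero_iff.1 hA0)
  exact Finset.sum_pos' (fun j _ => Real.rpow_nonneg (hA.eigenvalues_nonneg j) _)
    ⟨i, Finset.mem_univ i, Real.rpow_pos_of_pos ((hA.eigenvalues_nonneg i).lt_of_ne' hi) _⟩

theorem traceR_mpow_mul_conjTranspose (M : Mat n) (s : ℝ) :
    traceR (mpow (M * Mᴴ) s) = traceR (mpow (Mᴴ * M) s) := by
  have h₁ := isHermitian_mul_conjTranspose_self M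
  have h₂ := isHermitian_conjTranspose_mul_self M
  rw [traceR_mpow h₁, traceR_mpow h₂,
    (h₁.eigenvalues_eq_eigenvalues_iff h₂).2 (charpoly_mul_comm ..)]

end Trace

section Holder

variable {A B : Mat n} {r p : ℝ}

theorem snorm_of_posSemidef (hA : A.PosSemidef) (p : ℝ) :
    snorm p A = traceR (mpow A p) ^ (1 / p) := by
  have hsq : Aᴴ * A = mpow A 2 := by
    rw [hA.1.eq, ← one_add_one_eq_two, ← mpow_mul_mpow hA (by norm_num), mpow_one hA.1]
  rw [snorm, hsq, mpow_mpow hA, mul_div_cancel₀ _ two_ne_zero]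

theorem snorm_nonneg (p : ℝ) (x : Mat n) : 0 ≤ snorm p x :=
  Real.rpow_nonneg (traceR_mpow_nonneg (posSemidef_conjTranspose_mul_self x) _) _

/-- Transition probabilities `|⟨uᵢ, vⱼ⟩|²` between the eigenbases of two Hermitian matrices. -/
def overlap (hA : A.IsHermitian) (hB : B.IsHermitian) (i j : n) : ℝ :=
  ‖(star hA.eigenvectorUnitary * hB.eigenvectorUnitary).1 i j‖ ^ 2

theorem overlap_nonneg (hA : A.IsHermitian) (hB : B.IsHermitian) (i j : n) :
    0 ≤ overlap hA hB i j :=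
  sq_nonneg _

theorem overlap_comm (hA : A.IsHermitian) (hB : B.IsHermitian) (i j : n) :
    overlap hA hB i j = overlap hB hA j i := by
  rw [overlap, overlap, ← norm_star, ← conjTranspose_apply, ← star_eq_conjTranspose,
    ← Unitary.coe_star, star_mul, star_star]

theorem sum_overlap (hA : A.IsHermitian) (hB : B.IsHermitian) (i : n) :
    ∑ j, overlap hA hB i j = 1 := by
  set W := star hA.eigenvectorUnitary * hB.eigenvectorUnitary
  have hrow : ∑ j, W.1 i j * star (W.1 i j) = 1 := by
    simpa only [mul_apply, star_apply, one_apply_eq] using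
      congrFun₂ (mem_unitaryGroup_iff.1 W.2) i i
  simp only [Complex.star_def, Complex.mul_conj'] at hrow
  exact_mod_cast hrow

theorem eigenvectorUnitary_conj_apply (hA : A.IsHermitian) (hB : B.IsHermitian) (j : n) :
    (star (hB.eigenvectorUnitary : Mat n) * A * hB.eigenvectorUnitary) j j =
      ∑ i, (hA.eigenvalues i * overlap hA hB i j : ℝ) := by
  set W := star hA.eigenvectorUnitary * hB.eigenvectorUnitary with hW
  have hconj : star (hB.eigenvectorUnitary : Mat n) * A * hB.eigenvectorUnitary =
      star W.1 * diagonal (fun i => (hA.eigenvalues i : ℂ)) * W.1 := by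
    conv_lhs => rw [hA.spectral_theorem, Unitary.conjStarAlgAut_apply]
    simp [W, mul_assoc, Function.comp_def]
  rw [hconj, mul_apply]
  simp only [mul_diagonal, star_apply, overlap, ← hW]
  push_cast
  refine Finset.sum_congr rfl fun i _ => ?_
  rw [← Complex.mul_conj', Complex.star_def]
  ring

theorem traceR_mul_eq_sum_overlap (hA : A.IsHermitian) (hB : B.IsHermitian) :
    traceR (A * B) = ∑ i, ∑ j, hA.eigenvalues i * hB.eigenvalues j * overlap hA hB i j := by
  have hB' : spectralMap hB (fun i => (hB.eigenvalues i : ℂ)) = B :=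
    hB.spectral_theorem.symm
  rw [Finset.sum_comm, ← congrArg (fun X => traceR (A * X)) hB', traceR, trace_mul_spectralMap,
    Complex.re_sum]
  refine Finset.sum_congr rfl fun j _ => ?_
  rw [eigenvectorUnitary_conj_apply hA hB, Complex.re_mul_ofReal, Complex.ofReal_re,
    Finset.sum_mul]
  exact Finset.sum_congr rfl fun i _ => by ring

theorem overlap_rpow_mul_rpow (hA : A.IsHermitian) (hB : B.IsHermitian)
    (hrp : r.HolderConjugate p) (i j : n) :
    overlap hA hB i j ^ (1 / r) * overlap hA hB i j ^ (1 / p) = overlap hA hB i j := by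
  have hsum : 1 / r + 1 / p = 1 := by simpa only [one_div] using hrp.inv_add_inv_eq_one
  rw [← Real.rpow_add' (overlap_nonneg hA hB i j) (by rw [hsum]; exact one_ne_zero), hsum,
    Real.rpow_one]

theorem traceR_mul_le_snorm_mul_snorm (hA : A.PosSemidef) (hB : B.PosSemidef)
    (hrp : r.HolderConjugate p) : traceR (A * B) ≤ snorm r A * snorm p B := by
  set a := hA.1.eigenvalues
  set b := hB.1.eigenvalues
  set w := overlap hA.1 hB.1
  have hw (i j : n) (s : ℝ) : 0 ≤ w i j ^ s := Real.rpow_nonneg (overlap_nonneg _ _ i j) s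
  have hpow {c : ℝ} (hc : 0 ≤ c) (i j : n) {s : ℝ} (hs : s ≠ 0) :
      (c * w i j ^ (1 / s)) ^ s = c ^ s * w i j := by
    rw [Real.mul_rpow hc (hw i j _), one_div, Real.rpow_inv_rpow (overlap_nonneg _ _ i j) hs]
  have hwrow (i : n) : ∑ j, w i j = 1 := sum_overlap hA.1 hB.1 i
  have hwcol (j : n) : ∑ i, w i j = 1 := by
    simpa only [w, overlap_comm hA.1] using sum_overlap hB.1 hA.1 j
  have hholder := Real.inner_le_Lp_mul_Lq_of_nonneg (Finset.univ : Finset (n × n))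
    (f := fun x => a x.1 * w x.1 x.2 ^ (1 / r)) (g := fun x => b x.2 * w x.1 x.2 ^ (1 / p)) hrp
    (fun x _ => mul_nonneg (hA.eigenvalues_nonneg _) (hw ..))
    (fun x _ => mul_nonneg (hB.eigenvalues_nonneg _) (hw ..))
  have hrow : ∑ i, ∑ j, (a i * w i j ^ (1 / r)) ^ r = traceR (mpow A r) := by
    simp only [hpow (hA.eigenvalues_nonneg _) _ _ hrp.ne_zero, ← Finset.mul_sum, hwrow, mul_one,
      traceR_mpow hA.1, a]
  have hcol : ∑ j, ∑ i, (b j * w i j ^ (1 / p)) ^ p = traceR (mpow B p) := by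
    simp only [hpow (hB.eigenvalues_nonneg _) _ _ hrp.symm.ne_zero, ← Finset.mul_sum, hwcol,
      mul_one, traceR_mpow hB.1, b]
  rw [Fintype.sum_prod_type, Fintype.sum_prod_type, hrow, Fintype.sum_prod_type_right, hcol,
    ← snorm_of_posSemidef hA, ← snorm_of_posSemidef hB] at hholder
  calc traceR (A * B)
      = ∑ i, ∑ j, a i * w i j ^ (1 / r) * (b j * w i j ^ (1 / p)) := by
        rw [traceR_mul_eq_sum_overlap hA.1 hB.1]
        refine Finset.sum_congr rfl fun i _ => Finset.sum_congr rfl fun j _ => ?_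
        rw [mul_mul_mul_comm, overlap_rpow_mul_rpow hA.1 hB.1 hrp]
    _ ≤ snorm r A * snorm p B := hholder

theorem rpow_le_of_le_mul_rpow {T c s : ℝ} (hs : 0 < s) (hT : 0 ≤ T) (hc : 0 ≤ c)
    (h : T ≤ c * T ^ (1 - s)) : T ^ s ≤ c := by
  rcases hT.eq_or_lt with rfl | hT
  · rwa [Real.zero_rpow hs.ne']
  · refine le_of_mul_le_mul_right ?_ (Real.rpow_pos_of_pos hT (1 - s))
    rwa [← Real.rpow_add hT, add_sub_cancel, Real.rpow_one]

theorem traceR_mul_mpow_sub_one_le (hA : A.PosSemidef) (hB : B.PosSemidef) (hr : 1 ≤ r) :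
    traceR (A * mpow B (r - 1)) ≤ snorm r A * traceR (mpow B r) ^ (1 - 1 / r) := by
  rcases hr.eq_or_lt with rfl | hr
  · simp [mpow_zero hB.1, snorm_of_posSemidef hA, mpow_one hA.1]
  · have hrp := Real.HolderConjugate.conjExponent hr
    have h := traceR_mul_le_snorm_mul_snorm hA (mpow_posSemidef hB (r - 1)) hrp
    rwa [snorm_of_posSemidef (mpow_posSemidef hB _), mpow_mpow hB, hrp.sub_one_mul_conj,
      one_div r.conjExponent, ← hrp.one_sub_inv, ← one_div] at h

theorem mul_mpow_sub_one (hA : A.PosSemidef) (hr : r ≠ 0) : A * mpow A (r - 1) = mpow A r := by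
  nth_rw 1 [← mpow_one hA.1]
  rw [mpow_mul_mpow hA (by simpa using hr), add_sub_cancel]

theorem snorm_mono (hA : A.PosSemidef) (hAB : (B - A).PosSemidef) (hr : 1 ≤ r) :
    snorm r A ≤ snorm r B := by
  have hB : B.PosSemidef := by simpa using hA.add hAB
  rw [snorm_of_posSemidef hA]
  refine rpow_le_of_le_mul_rpow (by positivity) (traceR_mpow_nonneg hA r) (snorm_nonneg r B) ?_
  calc traceR (mpow A r) = traceR (A * mpow A (r - 1)) := by
        rw [mul_mpow_sub_one hA (by positivity)]
    _ ≤ traceR (B * mpow A (r - 1)) := traceR_mul_le_traceR_mul hAB (mpow_posSemidef hA _)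
    _ ≤ snorm r B * traceR (mpow A r) ^ (1 - 1 / r) := traceR_mul_mpow_sub_one_le hB hA hr

theorem snorm_mul_conjTranspose (M : Mat n) (r : ℝ) : snorm r (M * Mᴴ) = snorm r (Mᴴ * M) := by
  rw [snorm_of_posSemidef (posSemidef_self_mul_conjTranspose M),
    snorm_of_posSemidef (posSemidef_conjTranspose_mul_self M), traceR_mpow_mul_conjTranspose]

theorem snorm_conj_le {V : Mat n} (hA : A.PosSemidef) (hV : (1 - V * Vᴴ).PosSemidef)
    (hr : 1 ≤ r) : snorm r (Vᴴ * A * V) ≤ snorm r A := by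
  set S := mpow A (1 / 2)
  have hS : Sᴴ = S := mpow_isHermitian A _
  have hSS : S * S = A := mpow_half_mul_self hA
  calc snorm r (Vᴴ * A * V) = snorm r ((S * V)ᴴ * (S * V)) := by
        rw [conjTranspose_mul, hS, ← hSS]; simp only [mul_assoc]
    _ = snorm r (S * V * (S * V)ᴴ) := (snorm_mul_conjTranspose _ r).symm
    _ ≤ snorm r A := by
        refine snorm_mono (posSemidef_self_mul_conjTranspose _) ?_ hr
        have h : A - S * V * (S * V)ᴴ = Sᴴ * (1 - V * Vᴴ) * S := by
          rw [conjTranspose_mul, hS, mul_sub, sub_mul, mul_one, hSS]; simp only [mul_assoc]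
        rw [h]
        exact hV.conjTranspose_mul_mul_same S

end Holder

section Polar

/-- The partial isometry `X |X|⁻¹` of the polar decomposition of `X`, where the inverse is taken on
the support of `|X|`. -/
def polarFactor (X : Mat n) : Mat n := X * mpow (Xᴴ * X) (-(1 / 2))

theorem conjTranspose_polarFactor_mul (X : Mat n) :
    (polarFactor X)ᴴ * X = mpow (Xᴴ * X) (1 / 2) := by
  have hH := posSemidef_conjTranspose_mul_self X
  rw [polarFactor, conjTranspose_mul, (mpow_isHermitian _ _).eq, mul_assoc]
  nth_rw 2 [← mpow_one hH.1]
  rw [mpow_mul_mpow hH (by norm_num)]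
  norm_num

theorem polarFactor_mul_conjTranspose_mul_self (X : Mat n) :
    polarFactor X * (polarFactor X)ᴴ * polarFactor X = polarFactor X := by
  have hH := posSemidef_conjTranspose_mul_self X
  set H := Xᴴ * X with hHX
  set G := mpow H (-(1 / 2)) with hG
  have hGG : G * G = mpow H (-1) := by
    rw [mpow_mul_mpow hH (by norm_num)]; norm_num
  have hHG : H * G = mpow H (1 / 2) := by
    nth_rw 1 [← mpow_one hH.1]
    rw [mpow_mul_mpow hH (by norm_num)]; norm_num
  rw [polarFactor, ← hHX, ← hG]
  calc X * G * (X * G)ᴴ * (X * G) = X * (G * G * (H * G)) := by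
        rw [conjTranspose_mul, show Gᴴ = G from mpow_isHermitian H _, hHX]; simp only [mul_assoc]
    _ = X * G := by
        rw [hGG, hHG, mpow_mul_mpow hH (by norm_num), hG]; norm_num

theorem posSemidef_one_sub_polarFactor_mul (X : Mat n) :
    (1 - polarFactor X * (polarFactor X)ᴴ).PosSemidef := by
  set V := polarFactor X
  have hVV : V * Vᴴ * (V * Vᴴ) = V * Vᴴ := by
    rw [← mul_assoc, polarFactor_mul_conjTranspose_mul_self]
  have hproj : (1 - V * Vᴴ)ᴴ * (1 - V * Vᴴ) = 1 - V * Vᴴ := by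
    rw [conjTranspose_sub, conjTranspose_one, conjTranspose_mul, conjTranspose_conjTranspose,
      sub_mul, one_mul, mul_sub, mul_one, hVV, sub_self, sub_zero]
  exact hproj ▸ posSemidef_conjTranspose_mul_self _

end Polar

section SchattenHolder

theorem traceR_conjTranspose (A : Mat n) : traceR Aᴴ = traceR A := by
  simp [traceR, trace_conjTranspose]

theorem traceR_conjTranspose_mul_le_sqrt_mul_sqrt (C D : Mat n) :
    traceR (Cᴴ * D) ≤ √(traceR (Cᴴ * C)) * √(traceR (Dᴴ * D)) := by
  have hC : 0 ≤ traceR (Cᴴ * C) := traceR_nonneg (posSemidef_conjTranspose_mul_self C)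
  have hquad (s : ℝ) :
      0 ≤ traceR (Cᴴ * C) * (s * s) + (-2 * traceR (Cᴴ * D)) * s + traceR (Dᴴ * D) := by
    have hpos := traceR_nonneg (posSemidef_conjTranspose_mul_self (s • C - D))
    have hDC : traceR (Dᴴ * C) = traceR (Cᴴ * D) := by
      rw [← traceR_conjTranspose, conjTranspose_mul, conjTranspose_conjTranspose]
    have hexp : (s • C - D)ᴴ * (s • C - D) =
        s • (s • (Cᴴ * C)) - s • (Cᴴ * D) - s • (Dᴴ * C) + Dᴴ * D := by
      simp only [conjTranspose_sub, conjTranspose_smul, sub_mul, mul_sub, smul_mul_assoc,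
        mul_smul_comm, star_trivial, smul_sub]
      abel
    rw [hexp] at hpos
    simp only [traceR_add, traceR_sub, traceR_smul, hDC] at hpos
    linarith
  have hdiscrim := discrim_le_zero hquad
  rw [← Real.sqrt_mul hC]
  refine Real.le_sqrt_of_sq_le ?_
  rw [discrim] at hdiscrim
  linarith

theorem snorm_two_mul (r : ℝ) (X : Mat n) : snorm (2 * r) X = √(snorm r (Xᴴ * X)) := by
  have hX := posSemidef_conjTranspose_mul_self X
  rw [snorm_of_posSemidef hX, snorm, mul_div_cancel_left₀ _ two_ne_zero, Real.sqrt_eq_rpow,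
    ← Real.rpow_mul (traceR_mpow_nonneg hX r)]
  congr 1
  rw [one_div_mul_one_div, mul_comm r]

theorem sqrt_traceR_conjTranspose_mul_self_le (M : Mat n) {K Q : Mat n} {r : ℝ}
    (hK : K.PosSemidef) (hr : 1 ≤ r) (hQ : Qᴴ = Q) (hQQ : Q * Q = mpow K (r - 1)) :
    √(traceR ((M * Q)ᴴ * (M * Q))) ≤ snorm (2 * r) M * √(traceR (mpow K r) ^ (1 - 1 / r)) := by
  rw [snorm_two_mul, ← Real.sqrt_mul (snorm_nonneg _ _)]
  refine Real.sqrt_le_sqrt ?_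
  calc traceR ((M * Q)ᴴ * (M * Q)) = traceR (Mᴴ * M * mpow K (r - 1)) := by
        rw [← hQQ, conjTranspose_mul, hQ, mul_assoc, traceR_mul_comm]; simp only [mul_assoc]
    _ ≤ _ := traceR_mul_mpow_sub_one_le (posSemidef_conjTranspose_mul_self M) hK hr

theorem snorm_two_mul_conjTranspose_mul_le (A : Mat n) {V : Mat n} {r : ℝ}
    (hV : (1 - V * Vᴴ).PosSemidef) (hr : 1 ≤ r) : snorm (2 * r) (Aᴴ * V) ≤ snorm (2 * r) A := by
  rw [snorm_two_mul, snorm_two_mul, ← snorm_mul_conjTranspose A, conjTranspose_mul,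
    conjTranspose_conjTranspose, ← mul_assoc, mul_assoc Vᴴ]
  exact Real.sqrt_le_sqrt (snorm_conj_le (posSemidef_self_mul_conjTranspose A) hV hr)

theorem snorm_mul_le (A B : Mat n) {r : ℝ} (hr : 1 ≤ r) :
    snorm r (A * B) ≤ snorm (2 * r) A * snorm (2 * r) B := by
  have hH := posSemidef_conjTranspose_mul_self (A * B)
  set V := polarFactor (A * B)
  set K := mpow ((A * B)ᴴ * (A * B)) (1 / 2)
  have hK : K.PosSemidef := mpow_posSemidef hH _
  have hVK : Vᴴ * (A * B) = K := conjTranspose_polarFactor_mul _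
  set Q := mpow (mpow K (r - 1)) (1 / 2)
  have hQ : Qᴴ = Q := mpow_isHermitian _ _
  have hQQ : Q * Q = mpow K (r - 1) := mpow_half_mul_self (mpow_posSemidef hK _)
  set T := traceR (mpow K r)
  have hT : 0 ≤ T := traceR_mpow_nonneg hK r
  have hself : T ≤ snorm (2 * r) A * snorm (2 * r) B * T ^ (1 - 1 / r) := calc
    T = traceR ((Aᴴ * V * Q)ᴴ * (B * Q)) := by
      have hcycle : (Aᴴ * V * Q)ᴴ * (B * Q) = Q * (Vᴴ * (A * B)) * Q := by
        simp only [conjTranspose_mul, conjTranspose_conjTranspose, hQ, mul_assoc]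
      rw [hcycle, traceR_mul_comm, ← mul_assoc, hVK, hQQ, traceR_mul_comm,
        mul_mpow_sub_one hK (by positivity)]
    _ ≤ √(traceR ((Aᴴ * V * Q)ᴴ * (Aᴴ * V * Q))) * √(traceR ((B * Q)ᴴ * (B * Q))) :=
      traceR_conjTranspose_mul_le_sqrt_mul_sqrt _ _
    _ ≤ snorm (2 * r) (Aᴴ * V) * √(T ^ (1 - 1 / r)) * (snorm (2 * r) B * √(T ^ (1 - 1 / r))) :=
      mul_le_mul (sqrt_traceR_conjTranspose_mul_self_le _ hK hr hQ hQQ)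
        (sqrt_traceR_conjTranspose_mul_self_le B hK hr hQ hQQ) (Real.sqrt_nonneg _)
        (mul_nonneg (snorm_nonneg _ _) (Real.sqrt_nonneg _))
    _ = snorm (2 * r) (Aᴴ * V) * snorm (2 * r) B * T ^ (1 - 1 / r) := by
      rw [mul_mul_mul_comm, Real.mul_self_sqrt (by positivity)]
    _ ≤ snorm (2 * r) A * snorm (2 * r) B * T ^ (1 - 1 / r) := by
      have hV := posSemidef_one_sub_polarFactor_mul (A * B)
      gcongr
      exacts [snorm_nonneg _ _, snorm_two_mul_conjTranspose_mul_le A hV hr]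
  have hABT : snorm r (A * B) = T ^ (1 / r) := by
    rw [snorm, ← one_div_mul_eq_div, ← mpow_mpow hH]
  rw [hABT]
  exact rpow_le_of_le_mul_rpow (by positivity) hT
    (mul_nonneg (snorm_nonneg _ _) (snorm_nonneg _ _)) hself

end SchattenHolder

section Contraction

theorem norm_sum_mul_mul_le_one {R ι : Type*} [CStarAlgebra R] [PartialOrder R] [StarOrderedRing R]
    [Fintype ι] {c y d : ι → R} (hc : ‖∑ i, c i * star (c i)‖ ≤ 1)
    (hy : ∀ i, ‖y i‖ ≤ 1) (hd : ‖∑ i, star (d i) * d i‖ ≤ 1) : ‖∑ i, c i * y i * d i‖ ≤ 1 := by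
  let u := (WithCStarModule.equiv R (ι → R)).symm fun i => star (y i * d i)
  let v := (WithCStarModule.equiv R (ι → R)).symm c
  have hle (i : ι) : star (y i * d i) * (y i * d i) ≤ star (d i) * d i := by
    have hyi : star (y i) * y i ≤ 1 := by
      rw [← CStarAlgebra.norm_le_one_iff_of_nonneg _ (star_mul_self_nonneg _),
        CStarRing.norm_star_mul_self]
      exact mul_le_one₀ (hy i) (norm_nonneg _) (hy i)
    simpa [mul_assoc] using star_left_conjugate_le_conjugate hyi (d i)
  have hu : ‖u‖ ^ 2 ≤ 1 := by
    rw [WithCStarModule.pi_norm_sq]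
    refine le_trans (CStarAlgebra.norm_le_norm_of_nonneg_of_le ?_ ?_) hd
    · exact Finset.sum_nonneg fun i _ => mul_star_self_nonneg _
    · refine Finset.sum_le_sum fun i _ => ?_
      simpa only [u, WithCStarModule.inner_def, WithCStarModule.equiv_symm_pi_apply, star_star]
        using hle i
  have hv : ‖v‖ ^ 2 ≤ 1 := by
    rw [WithCStarModule.pi_norm_sq]
    exact hc
  calc ‖∑ i, c i * y i * d i‖ = ‖(inner R u v : R)‖ := by
        simp [WithCStarModule.pi_inner, WithCStarModule.inner_def, u, v, mul_assoc]
    _ ≤ ‖u‖ * ‖v‖ := CStarModule.norm_inner_le _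
    _ ≤ 1 := mul_le_one₀ (by simpa using hu) (norm_nonneg _) (by simpa using hv)

end Contraction

section OperatorNorm

open scoped Matrix.Norms.L2Operator MatrixOrder

section ComplexPowers

variable {A : Mat n}

/-- The complex power `x ^ z` of a nonnegative real, with value `0` at `x = 0` for every exponent,
also for `z = 0`: thus `z ↦ supportCpow x z` is an entire homomorphism for all `x`. -/
def supportCpow (x : ℝ) (z : ℂ) : ℂ := if x = 0 then 0 else (x : ℂ) ^ z

theorem supportCpow_add (x : ℝ) (z w : ℂ) :
    supportCpow x (z + w) = supportCpow x z * supportCpow x w := by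
  rcases eq_or_ne x 0 with rfl | hx
  · simp [supportCpow]
  · simp [supportCpow, hx, Complex.cpow_add]

theorem star_supportCpow {x : ℝ} (hx : 0 ≤ x) (z : ℂ) :
    star (supportCpow x z) = supportCpow x (star z) := by
  have harg : (x : ℂ).arg ≠ Real.pi := by
    rw [Complex.arg_ofReal_of_nonneg hx]
    exact Real.pi_ne_zero.symm
  simp only [supportCpow, apply_ite star, star_zero]
  congr 1
  simpa using (Complex.cpow_conj (x : ℂ) z harg).symm

theorem supportCpow_ofReal {x s : ℝ} (hx : 0 ≤ x) (hs : s ≠ 0) :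
    supportCpow x s = ((x ^ s : ℝ) : ℂ) := by
  rcases eq_or_ne x 0 with rfl | hx0
  · simp [supportCpow, Real.zero_rpow hs]
  · simp [supportCpow, hx0, Complex.ofReal_cpow hx]

theorem norm_supportCpow_le {x : ℝ} (hx : 0 ≤ x) (z : ℂ) : ‖supportCpow x z‖ ≤ x ^ z.re := by
  rcases hx.eq_or_lt with rfl | hx
  · simpa [supportCpow] using Real.rpow_nonneg le_rfl _
  · simp [supportCpow, hx.ne', Complex.norm_cpow_eq_rpow_re_of_pos hx]

/-- The complex power `A ^ z` of a positive semidefinite matrix on its support; in particular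
`A ^ 0` is the support projection of `A`. -/
def cpow (hA : A.PosSemidef) (z : ℂ) : Mat n :=
  spectralMap hA.1 fun i => supportCpow (hA.1.eigenvalues i) z

theorem cpow_mul_cpow (hA : A.PosSemidef) (z w : ℂ) :
    cpow hA z * cpow hA w = cpow hA (z + w) := by
  simp only [cpow, ← map_mul, supportCpow_add]
  rfl

theorem star_cpow (hA : A.PosSemidef) (z : ℂ) : star (cpow hA z) = cpow hA (star z) := by
  simp only [cpow, ← map_star]
  congr 1 with i
  exact star_supportCpow (hA.eigenvalues_nonneg i) z

theorem cpow_ofReal (hA : A.PosSemidef) {s : ℝ} (hs : s ≠ 0) : cpow hA s = mpow A s := by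
  simp only [cpow, mpow_eq_spectralMap hA.1, supportCpow_ofReal (hA.eigenvalues_nonneg _) hs]

theorem cpow_one (hA : A.PosSemidef) : cpow hA 1 = A := by
  simpa [mpow_one hA.1] using cpow_ofReal hA one_ne_zero

theorem norm_cpow_le_one (hA : A.PosSemidef) {z : ℂ} (hz : z.re = 0) : ‖cpow hA z‖ ≤ 1 := by
  refine (NonUnitalStarAlgHom.norm_apply_le (spectralMap hA.1) _).trans ?_
  refine (pi_norm_le_iff_of_nonneg zero_le_one).2 fun i => ?_
  simpa [hz] using norm_supportCpow_le (hA.eigenvalues_nonneg i) z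

theorem norm_diag_le (M : Mat n) (i : n) : ‖M i i‖ ≤ ‖M‖ := by
  have h := (PiLp.norm_apply_le _ i).trans (l2_opNorm_mulVec M (EuclideanSpace.single i (1 : ℂ)))
  simpa using h

theorem norm_trace_mul_cpow_le (hA : A.PosSemidef) {C : Mat n} (hC : ‖C‖ ≤ 1) (z : ℂ) :
    ‖(C * cpow hA z).trace‖ ≤ traceR (mpow A z.re) := by
  rw [cpow, trace_mul_spectralMap, traceR_mpow hA.1]
  refine norm_sum_le_of_le _ fun i _ => ?_
  rw [norm_mul, ← one_mul (_ ^ _)]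
  gcongr
  · refine (norm_diag_le _ i).trans ?_
    rwa [CStarRing.norm_mul_coe_unitary, ← Unitary.coe_star, CStarRing.norm_coe_unitary_mul]
  · exact norm_supportCpow_le (hA.eigenvalues_nonneg i) z

end ComplexPowers

section Strip

variable {E E' : Type*} [NormedAddCommGroup E] [NormedSpace ℂ E] [NormedAddCommGroup E']
  [NormedSpace ℂ E']

/-- Entire functions that are bounded on the strip `0 ≤ re z ≤ 1`, a class to which the three lines
theorem applies and which is closed under the operations needed here. -/
def EntireBoundedOnStrip (F : ℂ → E) : Prop :=
  Differentiable ℂ F ∧ ∃ C : ℝ, ∀ z : ℂ, z.re ∈ Set.Icc 0 1 → ‖F z‖ ≤ C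

namespace EntireBoundedOnStrip

theorem sum {ι : Type*} [Fintype ι] {F : ι → ℂ → E} (hF : ∀ i, EntireBoundedOnStrip (F i)) :
    EntireBoundedOnStrip fun z => ∑ i, F i z := by
  choose hdiff C hC using hF
  exact ⟨Differentiable.fun_sum fun i _ => hdiff i, ∑ i, C i,
    fun z hz => norm_sum_le_of_le _ fun i _ => hC i z hz⟩

theorem mul {R : Type*} [NormedRing R] [NormedAlgebra ℂ R] {F G : ℂ → R}
    (hF : EntireBoundedOnStrip F) (hG : EntireBoundedOnStrip G) :
    EntireBoundedOnStrip fun z => F z * G z := by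
  obtain ⟨hF, C, hC⟩ := hF
  obtain ⟨hG, D, hD⟩ := hG
  exact ⟨hF.mul hG, C * D, fun z hz => norm_mul_le_of_le (hC z hz) (hD z hz)⟩

theorem comp_linearMap [FiniteDimensional ℂ E] {F : ℂ → E} (hF : EntireBoundedOnStrip F)
    (L : E →ₗ[ℂ] E') : EntireBoundedOnStrip fun z => L (F z) := by
  obtain ⟨hF, C, hC⟩ := hF
  exact ⟨L.toContinuousLinearMap.differentiable.comp hF, ‖L.toContinuousLinearMap‖ * C,
    fun z hz => L.toContinuousLinearMap.le_opNorm_of_le (hC z hz)⟩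

theorem pi {ι : Type*} [Fintype ι] {F : ℂ → ι → E}
    (hF : ∀ i, EntireBoundedOnStrip fun z => F z i) : EntireBoundedOnStrip F := by
  choose hdiff C hC using hF
  refine ⟨differentiable_pi.2 hdiff, ∑ i, |C i|, fun z hz => ?_⟩
  refine (pi_norm_le_iff_of_nonneg (Finset.sum_nonneg fun i _ => abs_nonneg _)).2 fun i => ?_
  exact ((hC i z hz).trans (le_abs_self _)).trans
    (Finset.single_le_sum (fun i _ => abs_nonneg (C i)) (Finset.mem_univ i))

theorem supportCpow {x : ℝ} (hx : 0 ≤ x) {φ : ℂ → ℂ} (hφ : Differentiable ℂ φ) {C : ℝ}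
    (hC : ∀ z : ℂ, z.re ∈ Set.Icc 0 1 → |(φ z).re| ≤ C) :
    EntireBoundedOnStrip fun z => supportCpow x (φ z) := by
  rcases hx.eq_or_lt with rfl | hx
  · simpa [GJL.supportCpow] using ⟨differentiable_const 0, 0, by simp⟩
  refine ⟨?_, Real.exp (|Real.log x| * C), fun z hz => (norm_supportCpow_le hx.le _).trans ?_⟩
  · simp only [GJL.supportCpow, hx.ne', if_false]
    exact fun z => (hφ z).const_cpow (.inl (by simpa using hx.ne'))
  · rw [Real.rpow_def_of_pos hx, Real.exp_le_exp]
    refine (le_abs_self _).trans ?_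
    rw [abs_mul]
    gcongr
    exact hC z hz

theorem cpow {A : Mat n} (hA : A.PosSemidef) {φ : ℂ → ℂ} (hφ : Differentiable ℂ φ) {C : ℝ}
    (hC : ∀ z : ℂ, z.re ∈ Set.Icc 0 1 → |(φ z).re| ≤ C) :
    EntireBoundedOnStrip fun z => cpow hA (φ z) :=
  (pi fun i => supportCpow (hA.eigenvalues_nonneg i) hφ hC).comp_linearMap
    (spectralMap hA.1).toAlgHom.toLinearMap

theorem norm_le_rpow_mul_rpow {F : ℂ → E} (hF : EntireBoundedOnStrip F) {a b t : ℝ}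
    (ha : ∀ z : ℂ, z.re = 0 → ‖F z‖ ≤ a) (hb : ∀ z : ℂ, z.re = 1 → ‖F z‖ ≤ b)
    (ht : t ∈ Set.Icc 0 1) : ‖F t‖ ≤ a ^ (1 - t) * b ^ t := by
  obtain ⟨hF, C, hC⟩ := hF
  exact Complex.HadamardThreeLines.norm_le_interp_of_mem_verticalClosedStrip₀₁' F (z := t) ht
    hF.diffContOnCl ⟨C, Set.forall_mem_image.2 hC⟩ ha hb

end EntireBoundedOnStrip

end Strip

section PowConj

variable {A : Mat n}

/-- The map `x ↦ σ ^ s * x * σ ^ s`; for `s = -1 / (2 p')` it is the sandwiching in the definition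
of the relative entropy `D_p`, and for `s = 1 / (2 p')` it inverts that operation on the support. -/
def powConj (s : ℝ) (σ x : Mat n) : Mat n := mpow σ s * x * mpow σ s

theorem powConj_posSemidef {x : Mat n} (hx : x.PosSemidef) (s : ℝ) (σ : Mat n) :
    (powConj s σ x).PosSemidef := by
  simpa only [powConj, (mpow_isHermitian σ s).eq] using hx.mul_mul_conjTranspose_same (mpow σ s)

theorem mpow_mul_mpow_neg (hA : A.PosSemidef) {s : ℝ} (hs : s ≠ 0) :
    mpow A s * mpow A (-s) = cpow hA 0 := by
  rw [← cpow_ofReal hA hs, ← cpow_ofReal hA (neg_ne_zero.2 hs), cpow_mul_cpow]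
  simp

theorem mpow_neg_mul_mpow (hA : A.PosSemidef) {s : ℝ} (hs : s ≠ 0) :
    mpow A (-s) * mpow A s = cpow hA 0 := by
  simpa using mpow_mul_mpow_neg hA (neg_ne_zero.2 hs)

theorem cpow_zero_isHermitian (hA : A.PosSemidef) : (cpow hA 0).IsHermitian :=
  (star_cpow hA 0).trans (by rw [star_zero])

theorem posSemidef_one_sub_cpow_zero_mul (hA : A.PosSemidef) :
    (1 - cpow hA 0 * (cpow hA 0)ᴴ).PosSemidef := by
  rw [(cpow_zero_isHermitian hA).eq, cpow_mul_cpow, add_zero, cpow, ← map_one (spectralMap hA.1),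
    ← map_sub]
  refine posSemidef_spectralMap hA.1 fun i => ?_
  by_cases h : hA.1.eigenvalues i = 0 <;> simp [supportCpow, h]

theorem mul_cpow_zero_of_suppLe {x : Mat n} (hA : A.PosSemidef) (hx : suppLe x A) :
    x * cpow hA 0 = x := by
  have hker : A * (1 - cpow hA 0) = 0 := by
    rw [mul_sub, mul_one, sub_eq_zero]
    simpa only [cpow_one, add_zero] using (cpow_mul_cpow hA 1 0).symm
  suffices x * (1 - cpow hA 0) = 0 by rwa [mul_sub, mul_one, sub_eq_zero, eq_comm] at this
  refine ext_of_mulVec_single fun i => ?_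
  rw [zero_mulVec, ← mulVec_mulVec]
  exact hx _ (by rw [mulVec_mulVec, hker, zero_mulVec])

theorem powConj_neg_powConj (hA : A.PosSemidef) {s : ℝ} (hs : s ≠ 0) (x : Mat n) :
    powConj (-s) A (powConj s A x) = (cpow hA 0)ᴴ * x * cpow hA 0 := by
  calc powConj (-s) A (powConj s A x)
      = mpow A (-s) * mpow A s * x * (mpow A s * mpow A (-s)) := by simp only [powConj, mul_assoc]
    _ = (cpow hA 0)ᴴ * x * cpow hA 0 := by
      rw [mpow_mul_mpow_neg hA hs, mpow_neg_mul_mpow hA hs, (cpow_zero_isHermitian hA).eq]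

theorem powConj_powConj_neg {x : Mat n} (hA : A.PosSemidef) {s : ℝ} (hs : s ≠ 0)
    (hx : x.PosSemidef) (hsupp : suppLe x A) : powConj s A (powConj (-s) A x) = x := by
  have hright := mul_cpow_zero_of_suppLe hA hsupp
  have hleft : cpow hA 0 * x = x := by
    simpa [conjTranspose_mul, hx.1.eq, (cpow_zero_isHermitian hA).eq]
      using congrArg conjTranspose hright
  calc powConj s A (powConj (-s) A x)
      = mpow A s * mpow A (-s) * x * (mpow A (-s) * mpow A s) := by simp only [powConj, mul_assoc]
    _ = x := by rw [mpow_mul_mpow_neg hA hs, mpow_neg_mul_mpow hA hs, hleft, hright]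

end PowConj

section Subadditivity

variable {ι : Type*} [Fintype ι] {σ y : ι → Mat n}

/-- The entire function `z ↦ σ ^ (-z / 2) * τ ^ (z / 2)`, which carries the interpolation between a
summand `τ` and the sum `σ`. -/
def transfer {σ τ : Mat n} (hσ : σ.PosSemidef) (hτ : τ.PosSemidef) (z : ℂ) : Mat n :=
  cpow hσ (-(z / 2)) * cpow hτ (z / 2)

theorem star_transfer_star {σ τ : Mat n} (hσ : σ.PosSemidef) (hτ : τ.PosSemidef) (z : ℂ) :
    star (transfer hσ hτ (star z)) = cpow hτ (z / 2) * cpow hσ (-(z / 2)) := by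
  simp [transfer, star_cpow]

theorem norm_transfer_le_one {σ τ : Mat n} (hσ : σ.PosSemidef) (hτ : τ.PosSemidef) {z : ℂ}
    (hz : z.re = 0) : ‖transfer hσ hτ z‖ ≤ 1 :=
  calc ‖transfer hσ hτ z‖ ≤ 1 * 1 :=
        norm_mul_le_of_le (norm_cpow_le_one hσ (by simp [hz])) (norm_cpow_le_one hτ (by simp [hz]))
    _ = 1 := one_mul 1

theorem norm_sum_transfer_mul_star_le_one (hσ : ∀ i, (σ i).PosSemidef)
    (hsum : (∑ i, σ i).PosSemidef) {z : ℂ} (hz : z.re = 1) :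
    ‖∑ i, transfer hsum (hσ i) z * star (transfer hsum (hσ i) z)‖ ≤ 1 := by
  have hz' : z / 2 + star (z / 2) = 1 := by
    rw [Complex.star_def, Complex.add_conj]
    simp [hz]
  calc ‖∑ i, transfer hsum (hσ i) z * star (transfer hsum (hσ i) z)‖
      = ‖∑ i, cpow hsum (-(z / 2)) * (cpow (hσ i) (z / 2) * cpow (hσ i) (star (z / 2))) *
          cpow hsum (-star (z / 2))‖ := by
        simp only [transfer, star_mul, star_cpow, star_neg, mul_assoc]
    _ = ‖cpow hsum (-(z / 2)) * cpow hsum 1 * cpow hsum (-star (z / 2))‖ := by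
        simp only [cpow_mul_cpow, hz', cpow_one, ← Finset.mul_sum, ← Finset.sum_mul]
    _ = ‖cpow hsum 0‖ := by
        rw [cpow_mul_cpow, cpow_mul_cpow, ← hz']
        ring_nf
    _ ≤ 1 := norm_cpow_le_one hsum rfl

/-- The analytic family joining the powers `(y i) ^ p` at `re z = 0` to a contraction at
`re z = 1`. -/
def interpolant (hσ : ∀ i, (σ i).PosSemidef) (hsum : (∑ i, σ i).PosSemidef)
    (hy : ∀ i, (y i).PosSemidef) (p : ℝ) (z : ℂ) : Mat n :=
  ∑ i, transfer hsum (hσ i) z * cpow (hy i) (p * (1 - z)) * star (transfer hsum (hσ i) (star z))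

variable (hσ : ∀ i, (σ i).PosSemidef) (hsum : (∑ i, σ i).PosSemidef) (hy : ∀ i, (y i).PosSemidef)

theorem entireBoundedOnStrip_interpolant (p : ℝ) :
    EntireBoundedOnStrip (interpolant hσ hsum hy p) := by
  have half {B : Mat n} (hB : B.PosSemidef) : EntireBoundedOnStrip fun z => cpow hB (z / 2) :=
    .cpow hB (C := 1) (by fun_prop) fun z hz => by
      simp only [Complex.div_ofNat_re, abs_le, Set.mem_Icc] at hz ⊢; constructor <;> linarith
  have neg_half : EntireBoundedOnStrip fun z => cpow hsum (-(z / 2)) :=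
    .cpow hsum (C := 1) (by fun_prop) fun z hz => by
      simp only [Complex.neg_re, Complex.div_ofNat_re, abs_le, Set.mem_Icc] at hz ⊢
      constructor <;> linarith
  have mid (i : ι) : EntireBoundedOnStrip fun z => cpow (hy i) (p * (1 - z)) :=
    .cpow (hy i) (C := |p|) (by fun_prop) fun z hz => by
      simp only [Set.mem_Icc, Complex.re_ofReal_mul, Complex.sub_re, Complex.one_re] at hz ⊢
      rw [abs_mul, abs_of_nonneg (by linarith : 0 ≤ 1 - z.re)]
      exact mul_le_of_le_one_right (abs_nonneg p) (by linarith)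
  unfold interpolant
  simp only [star_transfer_star]
  refine .sum fun i => ?_
  exact ((neg_half.mul (half (hσ i))).mul (mid i)).mul ((half (hσ i)).mul neg_half)

theorem norm_trace_mul_interpolant_le (p : ℝ) {Y : Mat n} (hY : ‖Y‖ ≤ 1) {z : ℂ} (hz : z.re = 0) :
    ‖(Y * interpolant hσ hsum hy p z).trace‖ ≤ ∑ i, traceR (mpow (y i) p) := by
  rw [interpolant, Finset.mul_sum, trace_sum]
  refine norm_sum_le_of_le _ fun i _ => ?_
  set c := transfer hsum (hσ i) z
  set d := star (transfer hsum (hσ i) (star z))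
  have hc : ‖c‖ ≤ 1 := norm_transfer_le_one _ _ hz
  have hd : ‖d‖ ≤ 1 := by
    rw [norm_star]
    exact norm_transfer_le_one _ _ (by simpa using hz)
  have hdYc : ‖d * Y * c‖ ≤ 1 :=
    (norm_mul₃_le).trans (mul_le_one₀ (mul_le_one₀ hd (norm_nonneg _) hY) (norm_nonneg _) hc)
  calc ‖(Y * (c * cpow (hy i) (p * (1 - z)) * d)).trace‖
      = ‖(d * Y * c * cpow (hy i) (p * (1 - z))).trace‖ := by
        rw [← mul_assoc, trace_mul_comm]
        simp only [mul_assoc]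
    _ ≤ traceR (mpow (y i) p) := by
        simpa [hz] using norm_trace_mul_cpow_le (hy i) hdYc (p * (1 - z))

theorem norm_interpolant_le_one (p : ℝ) {z : ℂ} (hz : z.re = 1) :
    ‖interpolant hσ hsum hy p z‖ ≤ 1 := by
  refine norm_sum_mul_mul_le_one (norm_sum_transfer_mul_star_le_one hσ hsum hz)
    (fun i => norm_cpow_le_one (hy i) (by simp [hz])) ?_
  simpa only [star_star] using
    norm_sum_transfer_mul_star_le_one hσ hsum (z := star z) (by simpa using hz)

theorem interpolant_ofReal {p t : ℝ} (ht : t ≠ 0) (hpt : p * (1 - t) = 1) :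
    interpolant hσ hsum hy p t =
      powConj (-(t / 2)) (∑ i, σ i) (∑ i, powConj (t / 2) (σ i) (y i)) := by
  have ht2 : t / 2 ≠ 0 := div_ne_zero ht two_ne_zero
  have hhalf {B : Mat n} (hB : B.PosSemidef) : cpow hB (t / 2) = mpow B (t / 2) := by
    exact_mod_cast cpow_ofReal hB ht2
  have hneg : cpow hsum (-(t / 2)) = mpow (∑ i, σ i) (-(t / 2)) := by
    exact_mod_cast cpow_ofReal hsum (neg_ne_zero.2 ht2)
  have hmid (i : ι) : cpow (hy i) (p * (1 - t)) = y i := by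
    rw [show (p * (1 - t) : ℂ) = 1 by exact_mod_cast hpt, cpow_one]
  simp only [interpolant, star_transfer_star]
  simp only [transfer, hhalf, hneg, hmid, powConj, Finset.mul_sum, Finset.sum_mul, mul_assoc]

theorem re_trace_cpow_mul_interpolant {r p : ℝ} (hrp : r.HolderConjugate p) {w : Mat n}
    (hw : w.PosSemidef)
    (hw_eq : w = powConj (-(r⁻¹ / 2)) (∑ i, σ i) (∑ i, powConj (r⁻¹ / 2) (σ i) (y i))) :
    (cpow hw (p * (r⁻¹ : ℝ)) * interpolant hσ hsum hy p (r⁻¹ : ℝ)).trace.re =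
      traceR (mpow w p) := by
  have hp := hrp.symm.pos
  have hr := inv_pos.2 hrp.pos
  have hinterp : interpolant hσ hsum hy p (r⁻¹ : ℝ) = w :=
    (interpolant_ofReal hσ hsum hy hr.ne' (by rw [hrp.one_sub_inv, mul_inv_cancel₀ hp.ne'])).trans
      hw_eq.symm
  have hexp : p * r⁻¹ = p - 1 := by
    rw [← hrp.symm.one_sub_inv, mul_sub, mul_one, mul_inv_cancel₀ hp.ne']
  have hpow : cpow hw (p * (r⁻¹ : ℝ)) = mpow w (p - 1) := by
    rw [← hexp]
    exact_mod_cast cpow_ofReal hw (mul_pos hp hr).ne'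
  rw [hpow, hinterp, trace_mul_comm, mul_mpow_sub_one hw hp.ne', traceR]

theorem traceR_mpow_powConj_sum_le (hσ : ∀ i, (σ i).PosSemidef) (hy : ∀ i, (y i).PosSemidef)
    {r p : ℝ} (hrp : r.HolderConjugate p) :
    traceR (mpow (powConj (-(r⁻¹ / 2)) (∑ i, σ i) (∑ i, powConj (r⁻¹ / 2) (σ i) (y i))) p) ≤
      ∑ i, traceR (mpow (y i) p) := by
  have hsum : (∑ i, σ i).PosSemidef := posSemidef_sum _ fun i _ => hσ i
  set w := powConj (-(r⁻¹ / 2)) (∑ i, σ i) (∑ i, powConj (r⁻¹ / 2) (σ i) (y i))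
  have hp := hrp.symm.pos
  have hw : w.PosSemidef :=
    powConj_posSemidef (posSemidef_sum _ fun i _ => powConj_posSemidef (hy i) _ _) _ _
  have hT : 0 ≤ traceR (mpow w p) := traceR_mpow_nonneg hw p
  have hsum0 : 0 ≤ ∑ i, traceR (mpow (y i) p) :=
    Finset.sum_nonneg fun i _ => traceR_mpow_nonneg (hy i) p
  let H (z : ℂ) : ℂ := (cpow hw (p * z) * interpolant hσ hsum hy p z).trace
  have hH : EntireBoundedOnStrip H :=
    ((EntireBoundedOnStrip.cpow hw (C := p) (by fun_prop) fun z hz => by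
      rw [Complex.re_ofReal_mul, abs_of_nonneg (mul_nonneg hp.le hz.1)]
      exact mul_le_of_le_one_right hp.le hz.2).mul
    (entireBoundedOnStrip_interpolant hσ hsum hy p)).comp_linearMap (traceLinearMap n ℂ ℂ)
  have hleft (z : ℂ) (hz : z.re = 0) : ‖H z‖ ≤ ∑ i, traceR (mpow (y i) p) :=
    norm_trace_mul_interpolant_le hσ hsum hy p (norm_cpow_le_one hw (by simp [hz])) hz
  have hright (z : ℂ) (hz : z.re = 1) : ‖H z‖ ≤ traceR (mpow w p) := by
    have := norm_trace_mul_cpow_le hw (norm_interpolant_le_one hσ hsum hy p hz) (p * z)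
    rwa [trace_mul_comm, Complex.re_ofReal_mul, hz, mul_one] at this
  have hvalue : (H (r⁻¹ : ℝ)).re = traceR (mpow w p) :=
    re_trace_cpow_mul_interpolant hσ hsum hy hrp hw rfl
  have hthree := hH.norm_le_rpow_mul_rpow hleft hright (t := r⁻¹)
    ⟨hrp.inv_nonneg, inv_le_one_of_one_le₀ hrp.lt.le⟩
  rw [← Real.rpow_le_rpow_iff hT hsum0 (inv_pos.2 hp)]
  refine rpow_le_of_le_mul_rpow (inv_pos.2 hp) hT (Real.rpow_nonneg hsum0 _) ?_
  calc traceR (mpow w p) ≤ ‖H (r⁻¹ : ℝ)‖ := hvalue ▸ Complex.re_le_norm _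
    _ ≤ _ := by simpa [hrp.one_sub_inv, hrp.symm.one_sub_inv] using hthree

theorem sandwich_eq_powConj {r p : ℝ} (hrp : r.HolderConjugate p) (ρ σ : Mat n) :
    sandwich p ρ σ = powConj (-(r⁻¹ / 2)) σ ρ := by
  have hexp : (1 - p) / (2 * p) = -(r⁻¹ / 2) := by
    rw [← hrp.symm.one_sub_inv]
    have := hrp.symm.ne_zero
    field_simp
    ring
  rw [sandwich, hexp, powConj]

theorem traceR_mpow_sandwich_sum_le {r p : ℝ} (hrp : r.HolderConjugate p) {ρ : ι → Mat n}
    (hρ : ∀ i, (ρ i).PosSemidef) (hσ : ∀ i, (σ i).PosSemidef) (hsupp : ∀ i, suppLe (ρ i) (σ i)) :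
    traceR (mpow (sandwich p (∑ i, ρ i) (∑ i, σ i)) p) ≤
      ∑ i, traceR (mpow (sandwich p (ρ i) (σ i)) p) := by
  simp only [sandwich_eq_powConj hrp]
  have hs : r⁻¹ / 2 ≠ 0 := (half_pos (inv_pos.2 hrp.pos)).ne'
  simpa only [powConj_powConj_neg (hσ _) hs (hρ _) (hsupp _)] using
    traceR_mpow_powConj_sum_le hσ (fun i => powConj_posSemidef (hρ i) (-(r⁻¹ / 2)) (σ i)) hrp

end Subadditivity

section SchattenDuality

variable {A : Mat n}

theorem snorm_le_one_iff (hA : A.PosSemidef) {p : ℝ} (hp : 0 < p) :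
    snorm p A ≤ 1 ↔ traceR (mpow A p) ≤ 1 := by
  rw [snorm_of_posSemidef hA]
  simpa only [Real.one_rpow] using
    Real.rpow_le_rpow_iff (traceR_mpow_nonneg hA p) zero_le_one (one_div_pos.2 hp)

theorem snorm_smul (A : Mat n) {c p : ℝ} (hc : 0 ≤ c) (hp : p ≠ 0) :
    snorm p (c • A) = c * snorm p A := by
  have hA := posSemidef_conjTranspose_mul_self A
  have hsq : (c • A)ᴴ * (c • A) = (c ^ (2 : ℝ)) • (Aᴴ * A) := by
    rw [conjTranspose_smul, star_trivial, smul_mul_smul_comm, Real.rpow_two, sq]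
  rw [snorm, hsq, mpow_smul hA (Real.rpow_nonneg hc 2), traceR_smul, ← Real.rpow_mul hc,
    mul_div_cancel₀ _ two_ne_zero, Real.mul_rpow (Real.rpow_nonneg hc p) (traceR_mpow_nonneg hA _),
    ← Real.rpow_mul hc, mul_one_div_cancel hp, Real.rpow_one, snorm]

theorem snorm_le_one_of_forall_traceR_mul_le_one (hA : A.PosSemidef) {r p : ℝ}
    (hrp : r.HolderConjugate p)
    (h : ∀ y : Mat n, y.PosSemidef → snorm p y ≤ 1 → traceR (A * y) ≤ 1) : snorm r A ≤ 1 := by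
  set T := traceR (mpow A r)
  rcases (traceR_mpow_nonneg hA r).eq_or_lt with hT | hT
  · rw [snorm_le_one_iff hA hrp.pos, ← hT]
    exact zero_le_one
  have hp := hrp.symm.pos
  have hy : (mpow A (r - 1)).PosSemidef := mpow_posSemidef hA _
  have hsnorm : snorm p (mpow A (r - 1)) = T ^ (1 / p) := by
    rw [snorm_of_posSemidef hy, mpow_mpow hA, hrp.sub_one_mul_conj]
  have hscale : 0 ≤ T ^ (-(1 / p)) := Real.rpow_nonneg hT.le _
  calc snorm r A = T ^ (-(1 / p)) * T := by
        rw [snorm_of_posSemidef hA, ← Real.rpow_add_one hT.ne', one_div, one_div,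
          ← hrp.symm.one_sub_inv]
        ring_nf
    _ = traceR (A * T ^ (-(1 / p)) • mpow A (r - 1)) := by
        rw [mul_smul_comm, traceR_smul, mul_mpow_sub_one hA hrp.ne_zero]
    _ ≤ 1 := h _ (hy.smul hscale) (by
        rw [snorm_smul _ hscale hp.ne', hsnorm, ← Real.rpow_add hT, neg_add_cancel,
          Real.rpow_zero])

end SchattenDuality

section AmalgamatedBall

variable {N : StarSubalgebra ℂ (Mat n)} {r : ℝ} {x σ q : Mat n}

/-- Membership in the unit ball of the amalgamated `L_r` norm over `N`: the bilinear map
`(a, b) ↦ a * x * b` is a contraction from `L_{2r}(N) × L_{2r}(N)` to `L_r`. -/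
def MemAmalgamatedBall (N : StarSubalgebra ℂ (Mat n)) (r : ℝ) (x : Mat n) : Prop :=
  ∀ a b : Mat n, a ∈ N → b ∈ N → snorm r (a * x * b) ≤ snorm (2 * r) a * snorm (2 * r) b

theorem IsDensity.traceR_eq_one (hσ : IsDensity σ) : traceR σ = 1 := by
  rw [traceR, hσ.2, Complex.one_re]

theorem isDensity_inv_traceR_smul (hq : q.PosSemidef) (hq0 : 0 < traceR q) :
    IsDensity ((traceR q)⁻¹ • q) := by
  refine ⟨hq.smul (inv_nonneg.2 hq0.le), ?_⟩
  have htrace : q.trace = traceR q :=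
    Complex.ext rfl (Complex.nonneg_iff.1 hq.trace_nonneg).2.symm
  rw [trace_smul, htrace, Complex.real_smul, ← Complex.ofReal_mul, inv_mul_cancel₀ hq0.ne',
    Complex.ofReal_one]

theorem MemAmalgamatedBall.snorm_powConj_le_one (hx : MemAmalgamatedBall N r x) (hr : 0 < r)
    (hσN : σ ∈ N) (hσ : IsDensity σ) : snorm r (powConj (r⁻¹ / 2) σ x) ≤ 1 := by
  have hweight : snorm (2 * r) (mpow σ (r⁻¹ / 2)) = 1 := by
    rw [snorm_of_posSemidef (mpow_posSemidef hσ.1 _), mpow_mpow hσ.1,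
      show r⁻¹ / 2 * (2 * r) = 1 by field_simp, mpow_one hσ.1.1, hσ.traceR_eq_one, Real.one_rpow]
  have hmem : mpow σ (r⁻¹ / 2) ∈ N := mpow_mem hσN _
  simpa only [powConj, hweight, one_mul] using hx _ _ hmem hmem

theorem snorm_powConj_half_le (hr : 0 < r)
    (h : ∀ σ ∈ N, IsDensity σ → snorm r (powConj (r⁻¹ / 2) σ x) ≤ 1)
    (hqN : q ∈ N) (hq : q.PosSemidef) : snorm r (powConj (1 / 2) q x) ≤ snorm r q := by
  rcases eq_or_ne q 0 with rfl | hq0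
  · have hzero : mpow (0 : Mat n) (1 / 2) = 0 := by
      rw [mpow, cfc_apply_zero, Real.zero_rpow (by norm_num), map_zero]
    simp only [powConj, hzero, zero_mul, le_refl]
  set c := (traceR (mpow q r))⁻¹
  have hc : 0 < c := inv_pos.2 (traceR_mpow_pos hq hq0 r)
  set s := c ^ (r⁻¹ / 2)
  have hs : 0 ≤ s * s := mul_self_nonneg s
  have hscale : s * s * snorm r q = 1 := by
    rw [← Real.rpow_add hc, add_halves, snorm_of_posSemidef hq, one_div,
      ← Real.mul_rpow hc.le (traceR_mpow_nonneg hq r),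
      inv_mul_cancel₀ (traceR_mpow_pos hq hq0 r).ne', Real.one_rpow]
  have hconj : powConj (r⁻¹ / 2) (c • mpow q r) x = (s * s) • powConj (1 / 2) q x := by
    simp only [powConj, mpow_smul (mpow_posSemidef hq r) hc.le, mpow_mpow hq, smul_mul_assoc,
      mul_smul_comm, smul_smul, show r * (r⁻¹ / 2) = 1 / 2 by field_simp, s]
  have hmem : c • mpow q r ∈ N := by
    simpa only [Complex.coe_smul] using N.smul_mem (mpow_mem hqN r) (c : ℂ)
  have hdensity : IsDensity (c • mpow q r) :=
    isDensity_inv_traceR_smul (mpow_posSemidef hq r) (traceR_mpow_pos hq hq0 r)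
  have hle : s * s * snorm r (powConj (1 / 2) q x) ≤ s * s * snorm r q := by
    rw [hscale, ← snorm_smul _ hs hr.ne', ← hconj]
    exact h _ hmem hdensity
  exact le_of_mul_le_mul_left hle (hs.lt_of_ne' (left_ne_zero_of_mul_eq_one hscale))

theorem snorm_two_mul_conjTranspose (r : ℝ) (X : Mat n) :
    snorm (2 * r) Xᴴ = snorm (2 * r) X := by
  rw [snorm_two_mul, snorm_two_mul, conjTranspose_conjTranspose, snorm_mul_conjTranspose]

theorem memAmalgamatedBall_of_forall_density (hr : 1 ≤ r) (hx : x.PosSemidef)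
    (h : ∀ σ ∈ N, IsDensity σ → snorm r (powConj (r⁻¹ / 2) σ x) ≤ 1) :
    MemAmalgamatedBall N r x := by
  have hr0 : 0 < r := one_pos.trans_le hr
  set S := mpow x (1 / 2)
  have hS : Sᴴ = S := mpow_isHermitian x _
  have hSS : S * S = x := mpow_half_mul_self hx
  have hright (b : Mat n) (hb : b ∈ N) : snorm (2 * r) (S * b) ≤ snorm (2 * r) b := by
    have hq := posSemidef_self_mul_conjTranspose b
    have hqN : b * bᴴ ∈ N := N.mul_mem hb (star_mem (s := N) hb)
    set Q := mpow (b * bᴴ) (1 / 2)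
    have hQ : Qᴴ = Q := mpow_isHermitian _ _
    have hQQ : Q * Q = b * bᴴ := mpow_half_mul_self hq
    rw [snorm_two_mul, snorm_two_mul, ← snorm_mul_conjTranspose b, ← snorm_mul_conjTranspose]
    refine Real.sqrt_le_sqrt ?_
    calc snorm r (S * b * (S * b)ᴴ) = snorm r (S * Q * (S * Q)ᴴ) := by
          simp only [conjTranspose_mul, hS, hQ, mul_assoc]
          rw [← mul_assoc b, ← mul_assoc Q, hQQ, mul_assoc]
      _ = snorm r (powConj (1 / 2) (b * bᴴ) x) := by
          rw [snorm_mul_conjTranspose, conjTranspose_mul, hS, hQ, ← mul_assoc, mul_assoc Q, hSS,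
            powConj]
      _ ≤ snorm r (b * bᴴ) := snorm_powConj_half_le hr0 h hqN hq
  have hleft (a : Mat n) (ha : a ∈ N) : snorm (2 * r) (a * S) ≤ snorm (2 * r) a := by
    rw [← snorm_two_mul_conjTranspose, ← snorm_two_mul_conjTranspose r a, conjTranspose_mul, hS]
    exact hright _ (star_mem (s := N) ha)
  intro a b ha hb
  calc snorm r (a * x * b) = snorm r (a * S * (S * b)) := by
        rw [← hSS]
        simp only [mul_assoc]
    _ ≤ snorm (2 * r) (a * S) * snorm (2 * r) (S * b) := snorm_mul_le _ _ hr
    _ ≤ snorm (2 * r) a * snorm (2 * r) b :=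
        mul_le_mul (hleft a ha) (hright b hb) (snorm_nonneg _ _) (snorm_nonneg _ _)

end AmalgamatedBall

section Polarity

open scoped ComplexStarModule

theorem exists_trace_mul_eq (f : Mat n →ₗ[ℂ] ℂ) : ∃ X : Mat n, ∀ h, f h = (X * h).trace := by
  refine ⟨of fun j i => f (single i j 1), fun h => ?_⟩
  have hsingle (i j : n) : single i j (h i j) = h i j • single i j (1 : ℂ) := by
    rw [smul_single, smul_eq_mul, mul_one]
  conv_lhs => rw [matrix_eq_sum_single h]
  simp only [map_sum, hsingle, map_smul, smul_eq_mul, trace, diag_apply, mul_apply, of_apply]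
  rw [Finset.sum_comm]
  simp only [mul_comm]

theorem posSemidef_of_forall_traceR_mul_nonneg {x : Mat n} (hx : x.IsHermitian)
    (h : ∀ y : Mat n, y.PosSemidef → 0 ≤ traceR (x * y)) : x.PosSemidef := by
  refine .of_dotProduct_mulVec_nonneg hx fun v => Complex.nonneg_iff.2 ⟨?_, ?_⟩
  · have := h _ (posSemidef_vecMulVec_self_star v)
    rwa [traceR, mul_vecMulVec, trace_vecMulVec, dotProduct_comm] at this
  · exact (hx.im_star_dotProduct_mulVec_self v).symm

theorem traceR_realPart_mul (X : Mat n) {h : Mat n} (hh : h.IsHermitian) :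
    traceR ((ℜ X : Mat n) * h) = traceR (X * h) := by
  have hstar : traceR (star X * h) = traceR (X * h) := by
    rw [← traceR_conjTranspose, conjTranspose_mul, hh.eq, star_eq_conjTranspose,
      conjTranspose_conjTranspose, traceR_mul_comm]
  rw [realPart_apply_coe, smul_mul_assoc, traceR_smul, add_mul, traceR_add, hstar]
  ring

variable {W : Set (Mat n)}

/-- The matrices whose Hermitian part lies strictly below some element of `W`. -/
def strictLowerSet (W : Set (Mat n)) : Set (Mat n) :=
  {h | ∃ ω ∈ W, ∃ ε > (0 : ℝ), (ℜ h : Mat n) + ε • 1 ≤ ω}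

theorem isOpen_strictLowerSet (W : Set (Mat n)) : IsOpen (strictLowerSet W) := by
  refine Metric.isOpen_iff.2 ?_
  rintro h ⟨ω, hω, ε, hε, hle⟩
  refine ⟨ε / 2, half_pos hε, fun k hk => ⟨ω, hω, ε / 2, half_pos hε, ?_⟩⟩
  have hdist : ‖(ℜ (k - h) : Mat n)‖ ≤ ε / 2 :=
    (realPart.norm_le (k - h)).trans (mem_ball_iff_norm.1 hk).le
  have hnear : (ℜ (k - h) : Mat n) ≤ (ε / 2) • 1 := by
    refine (ℜ (k - h)).2.le_algebraMap_norm_self.trans ?_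
    rw [Algebra.algebraMap_eq_smul_one]
    exact smul_le_smul_of_nonneg_right hdist zero_le_one
  calc (ℜ k : Mat n) + (ε / 2) • 1 = ℜ h + ℜ (k - h) + (ε / 2) • 1 := by
        rw [map_sub, AddSubgroupClass.coe_sub, add_sub_cancel]
    _ ≤ ℜ h + (ε / 2) • 1 + (ε / 2) • 1 := by gcongr
    _ = ℜ h + ε • 1 := by rw [add_assoc, ← add_smul, add_halves]
    _ ≤ ω := hle

theorem convex_strictLowerSet (hW : Convex ℝ W) : Convex ℝ (strictLowerSet W) := by
  refine convex_iff_forall_pos.2 ?_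
  rintro h ⟨ω, hω, ε, hε, hle⟩ k ⟨τ, hτ, δ, hδ, hle'⟩ a b ha hb hab
  refine ⟨a • ω + b • τ, hW hω hτ ha.le hb.le hab, a * ε + b * δ, by positivity, ?_⟩
  calc (ℜ (a • h + b • k) : Mat n) + (a * ε + b * δ) • 1
      = a • ((ℜ h : Mat n) + ε • 1) + b • ((ℜ k : Mat n) + δ • 1) := by
        simp only [map_add, map_smul, AddSubgroup.coe_add, selfAdjoint.val_smul, add_smul,
          smul_add, smul_smul]
        abel
    _ ≤ a • ω + b • τ :=
        add_le_add (smul_le_smul_of_nonneg_left hle ha.le) (smul_le_smul_of_nonneg_left hle' hb.le)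

theorem mem_strictLowerSet {ω h : Mat n} (hω : ω ∈ W) {ε : ℝ} (hε : 0 < ε) (hh : h.IsHermitian)
    (hle : h + ε • 1 ≤ ω) : h ∈ strictLowerSet W :=
  ⟨ω, hω, ε, hε, by rwa [IsSelfAdjoint.coe_realPart hh]⟩

theorem exists_posSemidef_of_notMem_strictLowerSet (hW : Convex ℝ W)
    (hherm : ∀ ω ∈ W, ω.IsHermitian) {ω₀ : Mat n} (hω₀ : ω₀ ∈ W) {ε : ℝ} (hε : 0 < ε)
    (hε₀ : ε • 1 ≤ ω₀) {k : Mat n} (hk : k.IsHermitian) (hkW : k ∉ strictLowerSet W) :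
    ∃ x : Mat n, x.PosSemidef ∧ 0 < traceR (x * k) ∧
      ∀ ω ∈ W, traceR (x * ω) ≤ traceR (x * k) := by
  obtain ⟨f, hf⟩ := RCLike.geometric_hahn_banach_open_point (𝕜 := ℂ)
    (convex_strictLowerSet hW) (isOpen_strictLowerSet W) hkW
  obtain ⟨X, hX⟩ := exists_trace_mul_eq (f : Mat n →ₗ[ℂ] ℂ)
  set x : Mat n := ((ℜ X : selfAdjoint (Mat n)) : Mat n)
  have hsep {h : Mat n} (hh : h.IsHermitian) (hmem : h ∈ strictLowerSet W) :
      traceR (x * h) < traceR (x * k) := by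
    rw [traceR_realPart_mul X hh, traceR_realPart_mul X hk, traceR, traceR, ← hX, ← hX]
    exact hf h hmem
  have hneg {y : Mat n} (hy : y.PosSemidef) : -traceR (x * y) < traceR (x * k) := by
    have hmem : -y ∈ strictLowerSet W := mem_strictLowerSet hω₀ hε hy.1.neg <|
      (add_le_of_nonpos_left (neg_nonpos.2 hy.nonneg)).trans hε₀
    simpa [traceR] using hsep hy.1.neg hmem
  have hpos : 0 < traceR (x * k) := by simpa [traceR] using hneg PosSemidef.zero
  have hx : x.PosSemidef := by
    refine posSemidef_of_forall_traceR_mul_nonneg (ℜ X).2 fun y hy => ?_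
    by_contra! hlt
    have := hneg (hy.smul (div_nonneg hpos.le (neg_nonneg.2 hlt.le)))
    rw [mul_smul_comm, traceR_smul, div_neg, neg_mul, neg_neg, div_mul_cancel₀ _ hlt.ne] at this
    exact this.false
  refine ⟨x, hx, hpos, fun ω hω => le_of_forall_pos_le_add fun δ hδ => ?_⟩
  have htr : 0 < traceR x + 1 := by linarith [traceR_nonneg hx]
  have hη : 0 < δ / (traceR x + 1) := div_pos hδ htr
  have hherm' : (ω - (δ / (traceR x + 1)) • (1 : Mat n)).IsHermitian :=
    (hherm ω hω).sub (PosSemidef.one.smul hη.le).1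
  have hlt := hsep hherm' (mem_strictLowerSet hω hη hherm' (sub_add_cancel _ _).le)
  rw [mul_sub, traceR_sub, mul_smul_comm, traceR_smul, mul_one] at hlt
  have hδ' : δ / (traceR x + 1) * traceR x ≤ δ := by
    rw [div_mul_comm]
    exact mul_le_of_le_one_left hδ.le ((div_le_one htr).2 (le_add_of_nonneg_right zero_le_one))
  linarith

theorem exists_smul_sub_posSemidef_or_exists_traceR_mul_eq (hW : Convex ℝ W)
    (hherm : ∀ ω ∈ W, ω.IsHermitian) {ω₀ : Mat n} (hω₀ : ω₀ ∈ W) {ε : ℝ} (hε : 0 < ε)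
    (hε₀ : ε • 1 ≤ ω₀) {ρ : Mat n} (hρ : ρ.IsHermitian) {c : ℝ} (hc : 0 < c) :
    (∃ ω ∈ W, (c • ω - ρ).PosSemidef) ∨
      ∃ x : Mat n, x.PosSemidef ∧ traceR (x * ρ) = c ∧ ∀ ω ∈ W, traceR (x * ω) ≤ 1 := by
  have hcρ : (c⁻¹ • ρ).IsHermitian := hρ.smul (IsSelfAdjoint.all _)
  by_cases hmem : c⁻¹ • ρ ∈ strictLowerSet W
  · obtain ⟨ω, hω, η, hη, hle⟩ := hmem
    rw [IsSelfAdjoint.coe_realPart hcρ] at hle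
    have hle' : c⁻¹ • ρ ≤ ω := (le_add_of_nonneg_right (smul_nonneg hη.le zero_le_one)).trans hle
    refine .inl ⟨ω, hω, ?_⟩
    rw [← le_iff]
    exact (inv_smul_le_iff_of_pos hc).1 hle'
  · obtain ⟨x, hx, hpos, hle⟩ :=
      exists_posSemidef_of_notMem_strictLowerSet hW hherm hω₀ hε hε₀ hcρ hmem
    rw [mul_smul_comm, traceR_smul] at hpos hle
    have hxρ : 0 < traceR (x * ρ) := pos_of_mul_pos_right hpos (inv_nonneg.2 hc.le)
    refine .inr ⟨(c⁻¹ * traceR (x * ρ))⁻¹ • x, hx.smul (inv_nonneg.2 hpos.le), ?_, fun ω hω => ?_⟩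
    · rw [smul_mul_assoc, traceR_smul]
      field_simp
    · rw [smul_mul_assoc, traceR_smul, inv_mul_le_one₀ hpos]
      exact hle ω hω

end Polarity

section Support

variable {ρ ω σ : Mat n}

theorem suppLe_smul_smul {c : ℝ} (hc : c ≠ 0) (h : suppLe ρ σ) : suppLe (c • ρ) (c • σ) := by
  intro v hv
  rw [smul_mulVec, smul_eq_zero_iff_right hc] at hv
  rw [smul_mulVec, h v hv, smul_zero]

theorem suppLe_sum {ι : Type*} [Fintype ι] {ρ σ : ι → Mat n} (hσ : ∀ i, (σ i).PosSemidef)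
    (h : ∀ i, suppLe (ρ i) (σ i)) : suppLe (∑ i, ρ i) (∑ i, σ i) := by
  intro v hv
  have hsum : ∑ i, star v ⬝ᵥ (σ i *ᵥ v) = 0 := by
    rw [← dotProduct_sum, ← sum_mulVec, hv, dotProduct_zero]
  have hzero (i : ι) : σ i *ᵥ v = 0 := by
    rw [← (hσ i).dotProduct_mulVec_zero_iff]
    exact (Finset.sum_eq_zero_iff_of_nonneg fun i _ => (hσ i).dotProduct_mulVec_nonneg v).1 hsum i
      (Finset.mem_univ i)
  rw [sum_mulVec]
  exact Finset.sum_eq_zero fun i _ => h i v (hzero i)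

theorem suppLe_of_smul_sub_posSemidef (hρ : ρ.PosSemidef) {c : ℝ}
    (h : (c • ω - ρ).PosSemidef) : suppLe ρ ω := by
  intro v hv
  rw [← hρ.dotProduct_mulVec_zero_iff]
  refine le_antisymm ?_ (hρ.dotProduct_mulVec_nonneg v)
  simpa [sub_mulVec, smul_mulVec, hv] using h.dotProduct_mulVec_nonneg v

theorem suppLe_powConj (hσ : σ.PosSemidef) {s : ℝ} (hs : s ≠ 0) (x : Mat n) :
    suppLe (powConj s σ x) σ := by
  intro v hv
  have hpow : mpow σ (s - 1) * σ = mpow σ s := by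
    simpa only [mpow_one hσ.1, sub_add_cancel] using
      mpow_mul_mpow hσ (s := s - 1) (t := 1) (by rwa [sub_add_cancel])
  rw [powConj, ← mulVec_mulVec, ← hpow, ← mulVec_mulVec v, hv, mulVec_zero, mulVec_zero]

end Support

section Densities

variable {N : StarSubalgebra ℂ (Mat n)}

theorem traceR_pos {ρ : Mat n} (hρ : ρ.PosSemidef) (hρ0 : ρ ≠ 0) : 0 < traceR ρ := by
  simpa only [mpow_one hρ.1] using traceR_mpow_pos hρ hρ0 1

theorem convex_densities (N : StarSubalgebra ℂ (Mat n)) :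
    Convex ℝ {σ | σ ∈ N ∧ IsDensity σ} := by
  rintro σ ⟨hσN, hσ⟩ τ ⟨hτN, hτ⟩ a b ha hb hab
  refine ⟨?_, (hσ.1.smul ha).add (hτ.1.smul hb), ?_⟩
  · have hmem : (a : ℂ) • σ + (b : ℂ) • τ ∈ N :=
      add_mem (N.smul_mem hσN (a : ℂ)) (N.smul_mem hτN (b : ℂ))
    simpa only [Complex.coe_smul] using hmem
  · rw [trace_add, trace_smul, trace_smul, hσ.2, hτ.2, ← add_smul, hab, one_smul]

/-- The normalized identity, the maximally mixed density. -/
def uniformDensity (n : Type*) [Fintype n] [DecidableEq n] : Mat n :=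
  (traceR (1 : Mat n))⁻¹ • 1

theorem uniformDensity_mem (N : StarSubalgebra ℂ (Mat n)) : uniformDensity n ∈ N := by
  have hmem := N.smul_mem (one_mem N) (((traceR (1 : Mat n))⁻¹ : ℝ) : ℂ)
  rwa [Complex.coe_smul] at hmem

theorem isDensity_uniformDensity [Nontrivial (Mat n)] : IsDensity (uniformDensity n) :=
  isDensity_inv_traceR_smul .one (traceR_pos .one one_ne_zero)

theorem exists_smul_uniformDensity_sub_posSemidef [Nontrivial (Mat n)] {ρ : Mat n}
    (hρ : ρ.IsHermitian) : ∃ c : ℝ, 0 ≤ c ∧ (c • uniformDensity n - ρ).PosSemidef := by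
  have htr : 0 < traceR (1 : Mat n) := traceR_pos .one one_ne_zero
  refine ⟨‖ρ‖ * traceR (1 : Mat n), mul_nonneg (norm_nonneg ρ) htr.le, ?_⟩
  rw [uniformDensity, smul_smul, mul_inv_cancel_right₀ htr.ne', ← Algebra.algebraMap_eq_smul_one,
    ← le_iff]
  exact hρ.isSelfAdjoint.le_algebraMap_norm_self

theorem densities_alternative [Nontrivial (Mat n)] {W : Set (Mat n)} (hW : Convex ℝ W)
    (hherm : ∀ ω ∈ W, ω.IsHermitian) (huniform : uniformDensity n ∈ W) {ρ : Mat n}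
    (hρ : ρ.IsHermitian) {c : ℝ} (hc : 0 < c) :
    (∃ ω ∈ W, (c • ω - ρ).PosSemidef) ∨
      ∃ x : Mat n, x.PosSemidef ∧ traceR (x * ρ) = c ∧ ∀ ω ∈ W, traceR (x * ω) ≤ 1 := by
  have hε : 0 < (traceR (1 : Mat n))⁻¹ := inv_pos.2 (traceR_pos .one one_ne_zero)
  exact exists_smul_sub_posSemidef_or_exists_traceR_mul_eq hW hherm huniform hε le_rfl hρ hc

end Densities

section FiniteExponent

variable {N : StarSubalgebra ℂ (Mat n)} {ρ σ x : Mat n} {r p : ℝ}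

theorem traceR_mul_powConj (s : ℝ) (σ x y : Mat n) :
    traceR (x * powConj s σ y) = traceR (powConj s σ x * y) := by
  rw [powConj, ← mul_assoc, traceR_mul_comm, powConj]
  simp only [mul_assoc]

theorem sandwich_posSemidef (hρ : ρ.PosSemidef) (p : ℝ) (σ : Mat n) :
    (sandwich p ρ σ).PosSemidef :=
  powConj_posSemidef hρ _ σ

theorem traceR_mpow_sandwich_smul_smul (hρ : ρ.PosSemidef) (hσ : σ.PosSemidef) {c : ℝ}
    (hc : 0 < c) (hp : p ≠ 0) : traceR (mpow (sandwich p (c • ρ) (c • σ)) p) =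
      c * traceR (mpow (sandwich p ρ σ) p) := by
  have hscale : sandwich p (c • ρ) (c • σ) = c ^ (1 / p) • sandwich p ρ σ := by
    have hexp : c ^ ((1 - p) / (2 * p)) * c * c ^ ((1 - p) / (2 * p)) = c ^ (1 / p) := by
      rw [← Real.rpow_add_one hc.ne', ← Real.rpow_add hc]
      congr 1
      field_simp
      ring
    simp only [sandwich, mpow_smul hσ hc.le, smul_mul_assoc, mul_smul_comm, smul_smul, ← hexp]
    ring_nf
  rw [hscale, mpow_smul (sandwich_posSemidef hρ p σ) (Real.rpow_nonneg hc.le _), traceR_smul,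
    ← Real.rpow_mul hc.le, one_div_mul_cancel hp, Real.rpow_one]

/-- The unit ball of the positive cone for the gauge `ω ↦ exp (D_p(ω‖N) / p')`, with the infimum
in `D_p` replaced by an attained bound. -/
def relEntropyBall (N : StarSubalgebra ℂ (Mat n)) (p : ℝ) : Set (Mat n) :=
  {ω | ω.PosSemidef ∧ ∃ σ ∈ N, IsDensity σ ∧ suppLe ω σ ∧ snorm p (sandwich p ω σ) ≤ 1}

theorem convex_relEntropyBall (N : StarSubalgebra ℂ (Mat n)) (hrp : r.HolderConjugate p) :
    Convex ℝ (relEntropyBall N p) := by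
  have hp := hrp.symm.pos
  refine convex_iff_forall_pos.2 ?_
  rintro ω ⟨hω, σ, hσN, hσ, hωσ, hle⟩ ω' ⟨hω', σ', hσN', hσ', hωσ', hle'⟩ a b ha hb hab
  have hmix := hω.smul ha.le |>.add (hω'.smul hb.le)
  obtain ⟨hN, hdensity⟩ :=
    convex_densities N ⟨hσN, hσ⟩ ⟨hσN', hσ'⟩ ha.le hb.le hab
  have hpairs : ∀ i, (![a • σ, b • σ'] i).PosSemidef :=
    Fin.forall_fin_two.2 ⟨hσ.1.smul ha.le, hσ'.1.smul hb.le⟩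
  have hsupp : ∀ i, suppLe (![a • ω, b • ω'] i) (![a • σ, b • σ'] i) :=
    Fin.forall_fin_two.2 ⟨suppLe_smul_smul ha.ne' hωσ, suppLe_smul_smul hb.ne' hωσ'⟩
  have hsum := traceR_mpow_sandwich_sum_le hrp
    (Fin.forall_fin_two.2 ⟨hω.smul ha.le, hω'.smul hb.le⟩) hpairs hsupp
  have hsuppSum := suppLe_sum hpairs hsupp
  simp only [Fin.sum_univ_two, cons_val_zero, cons_val_one] at hsum hsuppSum
  refine ⟨hmix, a • σ + b • σ', hN, hdensity, hsuppSum, ?_⟩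
  rw [snorm_le_one_iff (sandwich_posSemidef hω p σ) hp] at hle
  rw [snorm_le_one_iff (sandwich_posSemidef hω' p σ') hp] at hle'
  rw [snorm_le_one_iff (sandwich_posSemidef hmix p _) hp]
  calc _ ≤ _ := hsum
    _ = a * traceR (mpow (sandwich p ω σ) p) + b * traceR (mpow (sandwich p ω' σ') p) := by
        rw [traceR_mpow_sandwich_smul_smul hω hσ.1 ha hp.ne',
          traceR_mpow_sandwich_smul_smul hω' hσ'.1 hb hp.ne']
    _ ≤ a * 1 + b * 1 := by gcongr
    _ = 1 := by rw [mul_one, mul_one, hab]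

theorem powConj_mem_relEntropyBall (hrp : r.HolderConjugate p) (hσN : σ ∈ N) (hσ : IsDensity σ)
    {y : Mat n} (hy : y.PosSemidef) (hle : snorm p y ≤ 1) :
    powConj (r⁻¹ / 2) σ y ∈ relEntropyBall N p := by
  have hs : r⁻¹ / 2 ≠ 0 := (half_pos (inv_pos.2 hrp.pos)).ne'
  refine ⟨powConj_posSemidef hy _ σ, σ, hσN, hσ, suppLe_powConj hσ.1 hs y, ?_⟩
  rw [sandwich_eq_powConj hrp, powConj_neg_powConj hσ.1 hs]
  exact (snorm_conj_le hy (posSemidef_one_sub_cpow_zero_mul hσ.1) hrp.symm.lt.le).trans hle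

theorem density_mem_relEntropyBall (hrp : r.HolderConjugate p) (hσN : σ ∈ N) (hσ : IsDensity σ) :
    σ ∈ relEntropyBall N p := by
  have hp := hrp.symm.pos
  have hroot : (mpow σ p⁻¹).PosSemidef := mpow_posSemidef hσ.1 _
  have hconj : powConj (r⁻¹ / 2) σ (mpow σ p⁻¹) = σ := by
    have hr := inv_pos.2 hrp.pos
    rw [powConj, mpow_mul_mpow hσ.1 (by positivity), mpow_mul_mpow hσ.1 (by positivity),
      add_right_comm, add_halves, hrp.inv_add_inv_eq_one, mpow_one hσ.1.1]
  rw [← hconj]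
  refine powConj_mem_relEntropyBall hrp hσN hσ hroot ?_
  rw [snorm_le_one_iff hroot hp, mpow_mpow hσ.1, inv_mul_cancel₀ hp.ne', mpow_one hσ.1.1,
    hσ.traceR_eq_one]

theorem memAmalgamatedBall_of_forall_relEntropyBall (hrp : r.HolderConjugate p)
    (hx : x.PosSemidef) (h : ∀ ω ∈ relEntropyBall N p, traceR (x * ω) ≤ 1) :
    MemAmalgamatedBall N r x :=
  memAmalgamatedBall_of_forall_density hrp.lt.le hx fun σ hσN hσ =>
    snorm_le_one_of_forall_traceR_mul_le_one (powConj_posSemidef hx _ σ) hrp fun y hy hle => by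
      rw [← traceR_mul_powConj]
      exact h _ (powConj_mem_relEntropyBall hrp hσN hσ hy hle)

theorem snorm_sandwich_le_of_smul_sub_posSemidef {ω : Mat n} (hp : 1 ≤ p) (hρ : ρ.PosSemidef)
    (hle : snorm p (sandwich p ω σ) ≤ 1) {c : ℝ} (hc : 0 ≤ c)
    (h : (c • ω - ρ).PosSemidef) : snorm p (sandwich p ρ σ) ≤ c := by
  have hdiff : (c • sandwich p ω σ - sandwich p ρ σ).PosSemidef := by
    have := powConj_posSemidef h ((1 - p) / (2 * p)) σ
    simpa only [sandwich, powConj, mul_sub, sub_mul, mul_smul_comm, smul_mul_assoc] using this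
  calc snorm p (sandwich p ρ σ) ≤ snorm p (c • sandwich p ω σ) :=
        snorm_mono (sandwich_posSemidef hρ p σ) hdiff hp
    _ = c * snorm p (sandwich p ω σ) :=
        snorm_smul _ hc (one_pos.trans_le hp).ne'
    _ ≤ c := mul_le_of_le_one_right hc hle

theorem traceR_mul_le_snorm_sandwich (hrp : r.HolderConjugate p) (hρ : ρ.PosSemidef)
    (hx : x.PosSemidef) (hball : MemAmalgamatedBall N r x) (hσN : σ ∈ N) (hσ : IsDensity σ)
    (hsupp : suppLe ρ σ) : traceR (x * ρ) ≤ snorm p (sandwich p ρ σ) := by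
  have hs : r⁻¹ / 2 ≠ 0 := (half_pos (inv_pos.2 hrp.pos)).ne'
  calc traceR (x * ρ) = traceR (powConj (r⁻¹ / 2) σ x * sandwich p ρ σ) := by
        rw [← traceR_mul_powConj, sandwich_eq_powConj hrp, powConj_powConj_neg hσ.1 hs hρ hsupp]
    _ ≤ snorm r (powConj (r⁻¹ / 2) σ x) * snorm p (sandwich p ρ σ) :=
        traceR_mul_le_snorm_mul_snorm (powConj_posSemidef hx _ σ) (sandwich_posSemidef hρ p σ) hrp
    _ ≤ snorm p (sandwich p ρ σ) :=
        mul_le_of_le_one_left (snorm_nonneg _ _) (hball.snorm_powConj_le_one hrp.pos hσN hσ)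

theorem exists_snorm_sandwich_le_or_exists_traceR_mul_eq [Nontrivial (Mat n)]
    (N : StarSubalgebra ℂ (Mat n)) (hrp : r.HolderConjugate p) (hρ : ρ.PosSemidef) {c : ℝ}
    (hc : 0 < c) :
    (∃ σ ∈ N, IsDensity σ ∧ suppLe ρ σ ∧ snorm p (sandwich p ρ σ) ≤ c) ∨
      ∃ x : Mat n, x.PosSemidef ∧ MemAmalgamatedBall N r x ∧ traceR (x * ρ) = c := by
  have huniform := density_mem_relEntropyBall hrp (uniformDensity_mem N) isDensity_uniformDensity
  rcases densities_alternative (convex_relEntropyBall N hrp) (fun ω hω => hω.1.1) huniform hρ.1 hc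
    with ⟨ω, ⟨-, σ, hσN, hσ, hωσ, hle⟩, hdom⟩ | ⟨x, hx, hxρ, hpolar⟩
  · have hρω := suppLe_of_smul_sub_posSemidef hρ hdom
    exact .inl ⟨σ, hσN, hσ, fun v hv => hρω v (hωσ v hv),
      snorm_sandwich_le_of_smul_sub_posSemidef hrp.symm.lt.le hρ hle hc.le hdom⟩
  · exact .inr ⟨x, hx, memAmalgamatedBall_of_forall_relEntropyBall hrp hx hpolar, hxρ⟩

end FiniteExponent

section InfiniteExponent

variable {N : StarSubalgebra ℂ (Mat n)} {ρ σ x : Mat n}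

theorem snorm_one_of_posSemidef (hx : x.PosSemidef) : snorm 1 x = traceR x := by
  rw [snorm_of_posSemidef hx, mpow_one hx.1, one_div_one, Real.rpow_one]

theorem snorm_one_powConj_half (hx : x.PosSemidef) (hσ : σ.PosSemidef) :
    snorm 1 (powConj (1⁻¹ / 2) σ x) = traceR (x * σ) := by
  rw [snorm_one_of_posSemidef (powConj_posSemidef hx _ σ), powConj, traceR_mul_comm, ← mul_assoc,
    inv_one, mpow_half_mul_self hσ, traceR_mul_comm]

theorem memAmalgamatedBall_one_iff (hx : x.PosSemidef) :
    MemAmalgamatedBall N 1 x ↔ ∀ σ ∈ N, IsDensity σ → traceR (x * σ) ≤ 1 := by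
  refine ⟨fun h σ hσN hσ => ?_, fun h => ?_⟩
  · rw [← snorm_one_powConj_half hx hσ.1]
    exact h.snorm_powConj_le_one one_pos hσN hσ
  · refine memAmalgamatedBall_of_forall_density le_rfl hx fun σ hσN hσ => ?_
    rw [snorm_one_powConj_half hx hσ.1]
    exact h σ hσN hσ

theorem traceR_mul_le_of_smul_sub_posSemidef (hx : x.PosSemidef) (hxσ : traceR (x * σ) ≤ 1)
    {c : ℝ} (hc : 0 ≤ c) (h : (c • σ - ρ).PosSemidef) : traceR (x * ρ) ≤ c := by
  calc traceR (x * ρ) = traceR (ρ * x) := traceR_mul_comm _ _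
    _ ≤ traceR (c • σ * x) := traceR_mul_le_traceR_mul h hx
    _ = c * traceR (x * σ) := by rw [smul_mul_assoc, traceR_smul, traceR_mul_comm]
    _ ≤ c := mul_le_of_le_one_right hc hxσ

theorem exp_Dinf (hρ : ρ.PosSemidef) (hρ0 : ρ ≠ 0) (hσ : IsDensity σ)
    (h : ∃ c : ℝ, 0 ≤ c ∧ (c • σ - ρ).PosSemidef) :
    EReal.exp (Dinf ρ σ) =
      ENNReal.ofReal (sInf {c : ℝ | 0 ≤ c ∧ (c • σ - ρ).PosSemidef}) := by
  have hpos : 0 < sInf {c : ℝ | 0 ≤ c ∧ (c • σ - ρ).PosSemidef} := by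
    refine (traceR_pos hρ hρ0).trans_le (le_csInf h fun c hc => ?_)
    have hone : traceR (1 * σ) ≤ 1 := by rw [one_mul, hσ.traceR_eq_one]
    simpa only [one_mul] using traceR_mul_le_of_smul_sub_posSemidef .one hone hc.1 hc.2
  rw [Dinf, if_pos h, EReal.exp_coe, Real.exp_log hpos]

theorem exp_Dinf_le (hρ : ρ.PosSemidef) (hρ0 : ρ ≠ 0) (hσ : IsDensity σ) {c : ℝ} (hc : 0 ≤ c)
    (h : (c • σ - ρ).PosSemidef) : EReal.exp (Dinf ρ σ) ≤ ENNReal.ofReal c := by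
  rw [exp_Dinf hρ hρ0 hσ ⟨c, hc, h⟩]
  exact ENNReal.ofReal_le_ofReal (csInf_le ⟨0, fun _ hd => hd.1⟩ ⟨hc, h⟩)

theorem ofReal_traceR_mul_le_exp_Dinf (hρ : ρ.PosSemidef) (hρ0 : ρ ≠ 0) (hx : x.PosSemidef)
    (hball : MemAmalgamatedBall N 1 x) (hσN : σ ∈ N) (hσ : IsDensity σ) :
    ENNReal.ofReal (traceR (x * ρ)) ≤ EReal.exp (Dinf ρ σ) := by
  by_cases h : ∃ c : ℝ, 0 ≤ c ∧ (c • σ - ρ).PosSemidef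
  · rw [exp_Dinf hρ hρ0 hσ h]
    have hxσ := (memAmalgamatedBall_one_iff hx).1 hball σ hσN hσ
    exact ENNReal.ofReal_le_ofReal <| le_csInf h fun c hc =>
      traceR_mul_le_of_smul_sub_posSemidef hx hxσ hc.1 hc.2
  · rw [Dinf, if_neg h]
    exact le_top

theorem exists_exp_Dinf_le_or_exists_traceR_mul_eq [Nontrivial (Mat n)]
    (N : StarSubalgebra ℂ (Mat n)) (hρ : ρ.PosSemidef) (hρ0 : ρ ≠ 0) {c : ℝ} (hc : 0 < c) :
    (∃ σ ∈ N, IsDensity σ ∧ EReal.exp (Dinf ρ σ) ≤ ENNReal.ofReal c) ∨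
      ∃ x : Mat n, x.PosSemidef ∧ MemAmalgamatedBall N 1 x ∧ traceR (x * ρ) = c := by
  rcases densities_alternative (convex_densities N) (fun σ hσ => hσ.2.1.1)
    ⟨uniformDensity_mem N, isDensity_uniformDensity⟩ hρ.1 hc
    with ⟨σ, ⟨hσN, hσ⟩, hdom⟩ | ⟨x, hx, hxρ, hpolar⟩
  · exact .inl ⟨σ, hσN, hσ, exp_Dinf_le hρ hρ0 hσ hc.le hdom⟩
  · exact .inr ⟨x, hx, (memAmalgamatedBall_one_iff hx).2 fun σ hσN hσ => hpolar σ ⟨hσN, hσ⟩, hxρ⟩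

theorem exp_Dinf_uniformDensity_ne_top [Nontrivial (Mat n)] (hρ : ρ.PosSemidef) (hρ0 : ρ ≠ 0) :
    EReal.exp (Dinf ρ (uniformDensity n)) ≠ ⊤ := by
  rw [exp_Dinf hρ hρ0 isDensity_uniformDensity (exists_smul_uniformDensity_sub_posSemidef hρ.1)]
  exact ENNReal.ofReal_ne_top

end InfiniteExponent

section FiniteRelativeEntropy

variable {N : StarSubalgebra ℂ (Mat n)} {ρ σ x : Mat n} {p : ℝ≥0∞} {r : ℝ}

theorem exp_Dp_of_suppLe (hpt : p ≠ ⊤) (hrp : r.HolderConjugate p.toReal) (hρ : ρ.PosSemidef)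
    (hρ0 : ρ ≠ 0) (hσ : σ.PosSemidef) (hsupp : suppLe ρ σ) :
    EReal.exp ((r⁻¹ : ℝ) * Dp p ρ σ) =
      ENNReal.ofReal (snorm p.toReal (sandwich p.toReal ρ σ)) := by
  have hp1 : p ≠ 1 := by
    rintro rfl
    exact hrp.symm.lt.ne' ENNReal.toReal_one
  have hs : r⁻¹ / 2 ≠ 0 := (half_pos (inv_pos.2 hrp.pos)).ne'
  have hS := sandwich_posSemidef hρ p.toReal σ
  have hS0 : sandwich p.toReal ρ σ ≠ 0 := fun h => hρ0 <| by
    rw [← powConj_powConj_neg hσ hs hρ hsupp, ← sandwich_eq_powConj hrp, h, powConj, mul_zero,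
      zero_mul]
  have hT := traceR_mpow_pos hS hS0 p.toReal
  have hexp : r⁻¹ * (p.toReal - 1)⁻¹ = 1 / p.toReal := by
    rw [← hrp.symm.one_sub_inv]
    have := hrp.symm.sub_one_ne_zero
    have := hrp.symm.ne_zero
    field_simp
  rw [Dp, if_neg hpt, if_neg hp1, if_neg fun h => h.2 hsupp, if_neg hT.ne', ← EReal.coe_mul,
    EReal.exp_coe, ← mul_assoc, hexp, mul_comm, ← Real.rpow_def_of_pos hT, snorm_of_posSemidef hS]

theorem Dp_of_not_suppLe (hpt : p ≠ ⊤) (hp : 1 < p.toReal) (hsupp : ¬suppLe ρ σ) :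
    Dp p ρ σ = ⊤ := by
  have hp1 : p ≠ 1 := by
    rintro rfl
    exact hp.ne' ENNReal.toReal_one
  rw [Dp, if_neg hpt, if_neg hp1, if_pos ⟨hp, hsupp⟩]

theorem ofReal_traceR_mul_le_exp_Dp_of_ne_top (hpt : p ≠ ⊤) (hrp : r.HolderConjugate p.toReal)
    (hρ : ρ.PosSemidef) (hρ0 : ρ ≠ 0) (hx : x.PosSemidef) (hball : MemAmalgamatedBall N r x)
    (hσN : σ ∈ N) (hσ : IsDensity σ) :
    ENNReal.ofReal (traceR (x * ρ)) ≤ EReal.exp ((r⁻¹ : ℝ) * Dp p ρ σ) := by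
  by_cases hsupp : suppLe ρ σ
  · rw [exp_Dp_of_suppLe hpt hrp hρ hρ0 hσ.1 hsupp]
    exact ENNReal.ofReal_le_ofReal (traceR_mul_le_snorm_sandwich hrp hρ hx hball hσN hσ hsupp)
  · rw [Dp_of_not_suppLe hpt hrp.symm.lt hsupp, EReal.coe_mul_top_of_pos (inv_pos.2 hrp.pos)]
    exact le_top

theorem exp_Dp_uniformDensity_ne_top [Nontrivial (Mat n)] (hpt : p ≠ ⊤)
    (hrp : r.HolderConjugate p.toReal) (hρ : ρ.PosSemidef) (hρ0 : ρ ≠ 0) :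
    EReal.exp ((r⁻¹ : ℝ) * Dp p ρ (uniformDensity n)) ≠ ⊤ := by
  obtain ⟨c, -, hdom⟩ := exists_smul_uniformDensity_sub_posSemidef hρ.1
  rw [exp_Dp_of_suppLe hpt hrp hρ hρ0 isDensity_uniformDensity.1
    (suppLe_of_smul_sub_posSemidef hρ hdom)]
  exact ENNReal.ofReal_ne_top

end FiniteRelativeEntropy

section Duality

variable {N : StarSubalgebra ℂ (Mat n)} {ρ σ x : Mat n} {p : ℝ≥0∞}

/-- The exponent `p'` with `1 / p + 1 / p' = 1`, for `1 < p ≤ ∞`, as a real number. -/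
def conjExponent (p : ℝ≥0∞) : ℝ := if p = ⊤ then 1 else p.toReal / (p.toReal - 1)

theorem holderConjugate_conjExponent (hp : 1 < p) (hpt : p ≠ ⊤) :
    (conjExponent p).HolderConjugate p.toReal := by
  rw [conjExponent, if_neg hpt]
  have hp1 : 1 < p.toReal := by
    simpa only [ENNReal.toReal_one] using (ENNReal.toReal_lt_toReal ENNReal.one_ne_top hpt).2 hp
  exact (Real.HolderConjugate.conjExponent hp1).symm

theorem conjExponent_top : conjExponent ⊤ = 1 := if_pos rfl

theorem conjExponent_pos (hp : 1 < p) : 0 < conjExponent p := by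
  rcases eq_or_ne p ⊤ with rfl | hpt
  · exact conjExponent_top ▸ one_pos
  · exact (holderConjugate_conjExponent hp hpt).pos

theorem exp_Dp_top (ρ σ : Mat n) :
    EReal.exp (((conjExponent ⊤)⁻¹ : ℝ) * Dp ⊤ ρ σ) = EReal.exp (Dinf ρ σ) := by
  rw [conjExponent_top, inv_one, EReal.coe_one, one_mul, Dp, if_pos rfl]

theorem exists_exp_Dp_ne_top [Nontrivial (Mat n)] (N : StarSubalgebra ℂ (Mat n)) (hp : 1 < p)
    (hρ : ρ.PosSemidef) (hρ0 : ρ ≠ 0) :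
    ∃ σ ∈ N, IsDensity σ ∧ EReal.exp (((conjExponent p)⁻¹ : ℝ) * Dp p ρ σ) ≠ ⊤ := by
  refine ⟨uniformDensity n, uniformDensity_mem N, isDensity_uniformDensity, ?_⟩
  rcases eq_or_ne p ⊤ with rfl | hpt
  · rw [exp_Dp_top]
    exact exp_Dinf_uniformDensity_ne_top hρ hρ0
  · exact exp_Dp_uniformDensity_ne_top hpt (holderConjugate_conjExponent hp hpt) hρ hρ0

theorem ofReal_traceR_mul_le_exp_Dp (hp : 1 < p) (hρ : ρ.PosSemidef) (hρ0 : ρ ≠ 0)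
    (hx : x.PosSemidef) (hball : MemAmalgamatedBall N (conjExponent p) x) (hσN : σ ∈ N)
    (hσ : IsDensity σ) :
    ENNReal.ofReal (traceR (x * ρ)) ≤ EReal.exp (((conjExponent p)⁻¹ : ℝ) * Dp p ρ σ) := by
  rcases eq_or_ne p ⊤ with rfl | hpt
  · rw [conjExponent_top] at hball
    rw [exp_Dp_top]
    exact ofReal_traceR_mul_le_exp_Dinf hρ hρ0 hx hball hσN hσ
  · exact ofReal_traceR_mul_le_exp_Dp_of_ne_top hpt (holderConjugate_conjExponent hp hpt) hρ hρ0
      hx hball hσN hσ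

theorem exists_exp_Dp_le_or_exists_traceR_mul_eq [Nontrivial (Mat n)]
    (N : StarSubalgebra ℂ (Mat n)) (hp : 1 < p) (hρ : ρ.PosSemidef) (hρ0 : ρ ≠ 0) {c : ℝ}
    (hc : 0 < c) :
    (∃ σ ∈ N, IsDensity σ ∧
        EReal.exp (((conjExponent p)⁻¹ : ℝ) * Dp p ρ σ) ≤ ENNReal.ofReal c) ∨
      ∃ x : Mat n, x.PosSemidef ∧ MemAmalgamatedBall N (conjExponent p) x ∧
        traceR (x * ρ) = c := by
  rcases eq_or_ne p ⊤ with rfl | hpt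
  · simp only [exp_Dp_top]
    rw [conjExponent_top]
    exact exists_exp_Dinf_le_or_exists_traceR_mul_eq N hρ hρ0 hc
  · have hrp := holderConjugate_conjExponent hp hpt
    refine (exists_snorm_sandwich_le_or_exists_traceR_mul_eq N hrp hρ hc).imp_left ?_
    rintro ⟨σ, hσN, hσ, hsupp, hle⟩
    refine ⟨σ, hσN, hσ, ?_⟩
    rw [exp_Dp_of_suppLe hpt hrp hρ hρ0 hσ.1 hsupp]
    exact ENNReal.ofReal_le_ofReal hle

theorem exp_mul_DpSet {c : ℝ} (hc : 0 < c) (p : ℝ≥0∞) (ρ : Mat n) (S : Set (Mat n)) :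
    EReal.exp (c * DpSet p ρ S) = ⨅ σ : {σ | σ ∈ S ∧ IsDensity σ}, EReal.exp (c * Dp p ρ σ) := by
  have hc' : (0 : EReal) < c := EReal.coe_pos.2 hc
  have hgc : GaloisConnection (fun b : ℝ≥0∞ => ENNReal.log b / c) fun a => EReal.exp (c * a) :=
    fun b a => by
      rw [EReal.div_le_iff_le_mul hc' (EReal.coe_ne_top c), ← EReal.exp_le_exp_iff,
        ENNReal.exp_log]
  rw [DpSet, ← iInf_subtype'']
  exact hgc.u_iInf

theorem iInf_eq_ofReal_sSup_of_alternative {ι : Sort*} {e : ι → ℝ≥0∞} {S : Set ℝ}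
    (hfin : ∃ i, e i ≠ ⊤) (hweak : ∀ i, ∀ t ∈ S, ENNReal.ofReal t ≤ e i)
    (halt : ∀ c > (0 : ℝ), (∃ i, e i ≤ ENNReal.ofReal c) ∨ c ∈ S) :
    ⨅ i, e i = ENNReal.ofReal (sSup S) := by
  have hbound {i} (hi : e i ≠ ⊤) {t : ℝ} (ht : t ∈ S) : t ≤ (e i).toReal :=
    (ENNReal.ofReal_le_iff_le_toReal hi).1 (hweak i t ht)
  refine le_antisymm ?_ (le_iInf fun i => ?_)
  · by_contra! hlt
    obtain ⟨c, hSc, hce⟩ := ENNReal.lt_iff_exists_nnreal_btwn.1 hlt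
    have hc : (0 : ℝ) < c := by exact_mod_cast pos_of_gt hSc
    rcases halt c hc with ⟨i, hi⟩ | hcS
    · rw [ENNReal.ofReal_coe_nnreal] at hi
      exact (hce.trans_le (iInf_le e i)).not_ge hi
    · obtain ⟨i, hi⟩ := hfin
      have hle := ENNReal.ofReal_le_ofReal (le_csSup ⟨_, fun t => hbound hi⟩ hcS)
      rw [ENNReal.ofReal_coe_nnreal] at hle
      exact hSc.not_ge hle
  · by_cases hi : e i = ⊤
    · rw [hi]
      exact le_top
    · rw [ENNReal.ofReal_le_iff_le_toReal hi]
      exact Real.sSup_le (fun t => hbound hi) ENNReal.toReal_nonneg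

end Duality

end OperatorNorm

theorem statement17_general (N : StarSubalgebra ℂ (Mat n)) {p : ℝ≥0∞} (hp : 1 < p) {ρ : Mat n}
    (hρ : ρ.PosSemidef) (hρ0 : ρ ≠ 0) :
    EReal.exp (((conjExponent p)⁻¹ : ℝ) * DpSet p ρ (N : Set (Mat n))) =
      ENNReal.ofReal (sSup {r : ℝ | ∃ x : Mat n, x.PosSemidef ∧
        MemAmalgamatedBall N (conjExponent p) x ∧ r = traceR (x * ρ)}) := by
  have : Nontrivial (Mat n) := ⟨ρ, 0, hρ0⟩
  rw [exp_mul_DpSet (inv_pos.2 (conjExponent_pos hp))]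
  refine iInf_eq_ofReal_sSup_of_alternative ?_ ?_ fun c hc => ?_
  · obtain ⟨σ, hσN, hσ, hfin⟩ := exists_exp_Dp_ne_top N hp hρ hρ0
    exact ⟨⟨σ, hσN, hσ⟩, hfin⟩
  · rintro ⟨σ, hσN, hσ⟩ _ ⟨x, hx, hball, rfl⟩
    exact ofReal_traceR_mul_le_exp_Dp hp hρ hρ0 hx hball hσN hσ
  · refine (exists_exp_Dp_le_or_exists_traceR_mul_eq N hp hρ hρ0 hc).imp ?_ ?_
    · rintro ⟨σ, hσN, hσ, hle⟩
      exact ⟨⟨σ, hσN, hσ⟩, hle⟩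
    · rintro ⟨x, hx, hball, hxρ⟩
      exact ⟨x, hx, hball, hxρ.symm⟩

/-- for `1 < p ≤ ∞` with `1/p + 1/p' = 1` (`p' = 1` for `p = ∞`)
and a density `ρ`,
`exp(D_p(ρ‖N)/p') = sup { Tr(xρ) : x ≥ 0, ‖a x b‖_{p'} ≤ ‖a‖_{2p'} ‖b‖_{2p'}
for all a, b ∈ N }`. -/
theorem statement17 {m : ℕ} (N : StarSubalgebra ℂ (Mat (Fin m)))
    (p : ℝ≥0∞) (hp : 1 < p) (ρ : Mat (Fin m)) (hρ : IsDensity ρ) :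
    letI p' : ℝ := if p = ⊤ then 1 else p.toReal / (p.toReal - 1)
    EReal.exp (((p'⁻¹ : ℝ) : EReal) * DpSet p ρ (N : Set (Mat (Fin m)))) =
      ENNReal.ofReal (sSup {r : ℝ | ∃ x : Mat (Fin m), x.PosSemidef ∧
        (∀ a b : Mat (Fin m), a ∈ N → b ∈ N →
          snorm p' (a * x * b) ≤ snorm (2 * p') a * snorm (2 * p') b) ∧
        r = traceR (x * ρ)}) := by
  refine statement17_general N hp hρ.1 ?_
  rintro rfl
  exact zero_ne_one ((trace_zero ..).symm.trans hρ.2)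

end GJL
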